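/- Achievability for the classical-quantum multiple-access channel (multiple-access phase): Let W : Y₁ × Y₂ → S(H) be a classical-quantum multiple-access channel with finite input alphabets Y₁, Y₂, and let Q₁ and Q₂ be probability distributions on Y₁ and Y₂ respectively. Suppose the pair of nonnegative reals (R₁, R₂) satisfies R₁ ≤ I₁ := Σ_{y₂} Q₂(y₂) χ(Q₁; W(·, y₂)), R₂ ≤ I₂ := Σ_{y₁} Q₁(y₁) χ(Q₂; W(y₁, ·)), and R₁ + R₂ ≤ I₁₂ := χ(Q₁×Q₂; W) (where W is regarded as a cq channel with input alphabet Y₁×Y₂). Then for every ε > 0 and δ > 0, for all sufficiently large n there exists an (n, J₁, J₂) MAC code with (1/n)·log₂ J₁ ≥ R₁ − δ, (1/n)·log₂ J₂ ≥ R₂ − δ, and average error at most ε. -/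

import Mathlib

open scoped BigOperators ComplexOrder

noncomputable section

/-- The Loewner order on operators: `A ≤ B` iff `B - A` is positive semidefinite. -/
def loewnerLE {ι : Type*} [Fintype ι] (A B : Matrix ι ι ℂ) : Prop := (B - A).PosSemidef

/-- A quantum state: a positive semidefinite operator with unit trace. -/
def IsState {ι : Type*} [Fintype ι] (ρ : Matrix ι ι ℂ) : Prop := ρ.PosSemidef ∧ ρ.trace = 1

/-- The von Neumann entropy `S(ρ) = −tr(ρ log₂ ρ)`, computed via eigenvalues. -/
noncomputable def vnEntropy {ι : Type*} [Fintype ι] [DecidableEq ι] (ρ : Matrix ι ι ℂ) : ℝ :=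
  if h : ρ.IsHermitian then -∑ i, h.eigenvalues i * Real.logb 2 (h.eigenvalues i) else 0

/-- The trace norm `‖A‖₁ = tr √(AᴴA)` (sum of singular values). -/
noncomputable def traceNorm {ι : Type*} [Fintype ι] [DecidableEq ι] (A : Matrix ι ι ℂ) : ℝ :=
  ∑ i, Real.sqrt ((Matrix.posSemidef_conjTranspose_mul_self A).1.eigenvalues i)

/-- A probability distribution on a finite set. -/
def IsDist {A : Type*} [Fintype A] (P : A → ℝ) : Prop := (∀ a, 0 ≤ P a) ∧ ∑ a, P a = 1

/-- The Holevo quantity `χ(P;W) = S(PW) − Σ_a P(a) S(W(a))`. -/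
noncomputable def holevo {A ι : Type*} [Fintype A] [Fintype ι] [DecidableEq ι]
    (P : A → ℝ) (W : A → Matrix ι ι ℂ) : ℝ :=
  vnEntropy (∑ a, (P a : ℂ) • W a) - ∑ a, P a * vnEntropy (W a)

/-- Tensor product `M 0 ⊗ ⋯ ⊗ M (n−1)` of matrices, realized on the index set `Fin n → ι`. -/
def tensorPow {n : ℕ} {ι : Type*} [Fintype ι] (M : Fin n → Matrix ι ι ℂ) :
    Matrix (Fin n → ι) (Fin n → ι) ℂ :=
  Matrix.of fun i j => ∏ k, M k (i k) (j k)

/-- The `n`-fold extension `W^{⊗n}(xⁿ) = W(x₁) ⊗ ⋯ ⊗ W(xₙ)` of a cq channel. -/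
def cqPow {A ι : Type*} [Fintype ι] (W : A → Matrix ι ι ℂ) (n : ℕ) (x : Fin n → A) :
    Matrix (Fin n → ι) (Fin n → ι) ℂ :=
  tensorPow fun k => W (x k)

/-- A POVM: positive semidefinite operators summing to at most the identity. -/
def IsPOVM {ι J : Type*} [Fintype ι] [DecidableEq ι] [Fintype J] (D : J → Matrix ι ι ℂ) : Prop :=
  (∀ j, (D j).PosSemidef) ∧ loewnerLE (∑ j, D j) 1

/-- Existence of an `(n, J₁, J₂)` bidirectional broadcast code for the cq channels `W₁`, `W₂`
with average errors `e₁ ≤ ε₁` and `e₂ ≤ ε₂`. -/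
def BroadcastCodeExists {A ι₁ ι₂ : Type*} [Fintype A] [Fintype ι₁] [DecidableEq ι₁]
    [Fintype ι₂] [DecidableEq ι₂]
    (W1 : A → Matrix ι₁ ι₁ ℂ) (W2 : A → Matrix ι₂ ι₂ ℂ)
    (n J1 J2 : ℕ) (ε₁ ε₂ : ℝ) : Prop :=
  ∃ (w : Fin J1 × Fin J2 → Fin n → A)
    (D1 : Fin J2 → Fin J1 → Matrix (Fin n → ι₁) (Fin n → ι₁) ℂ)
    (D2 : Fin J1 → Fin J2 → Matrix (Fin n → ι₂) (Fin n → ι₂) ℂ),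
    (∀ m2, IsPOVM (D1 m2)) ∧ (∀ m1, IsPOVM (D2 m1)) ∧
    (∀ m2, ((J1 : ℝ))⁻¹ * ∑ m1, ((1 - D1 m2 m1) * cqPow W1 n (w (m1, m2))).trace.re ≤ ε₁) ∧
    (∀ m1, ((J2 : ℝ))⁻¹ * ∑ m2, ((1 - D2 m1 m2) * cqPow W2 n (w (m1, m2))).trace.re ≤ ε₂)


/-- Existence of an `(n, J₁, J₂)` code for the cq multiple-access channel `W`
with average error at most `ε`. -/
def MACCodeExists {Y1 Y2 ι : Type*} [Fintype ι] [DecidableEq ι]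
    (W : Y1 → Y2 → Matrix ι ι ℂ) (n J1 J2 : ℕ) (ε : ℝ) : Prop :=
  ∃ (u : Fin J1 → Fin n → Y1) (v : Fin J2 → Fin n → Y2)
    (D : Fin J1 × Fin J2 → Matrix (Fin n → ι) (Fin n → ι) ℂ),
    IsPOVM D ∧
    (1 / ((J1 : ℝ) * (J2 : ℝ))) * ∑ m : Fin J1 × Fin J2,
      ((1 - D m) * tensorPow (fun k => W (u m.1 k) (v m.2 k))).trace.re ≤ ε

end

section PartOne
open Matrix
open scoped MatrixOrder Matrix.Norms.L2Operator

variable {κ : Type*} [Fintype κ] [DecidableEq κ]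

lemma mac_conj_nonneg {A B : Matrix κ κ ℂ} (hA : 0 ≤ A) (hB : 0 ≤ B) : 0 ≤ A * B * A := by
  have h := (hB.posSemidef.mul_mul_conjTranspose_same A)
  rw [hA.posSemidef.1.eq] at h
  exact h.nonneg

lemma mac_smul_nonneg {A : Matrix κ κ ℂ} (hA : 0 ≤ A) {t : ℝ} (ht : 0 ≤ t) : 0 ≤ (t : ℂ) • A :=
  (hA.posSemidef.smul (by exact_mod_cast ht)).nonneg

lemma mac_sq_le {M : Matrix κ κ ℂ} (h0 : 0 ≤ M) (h1 : M ≤ 1) : 0 ≤ M - M * M := by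
  have h1' : 0 ≤ 1 - M := sub_nonneg.2 h1
  have := add_nonneg (mac_conj_nonneg h0 h1') (mac_conj_nonneg h1' h0)
  convert this using 1
  noncomm_ring

lemma mac_gentle {K M : Matrix κ κ ℂ} (hK0 : 0 ≤ K) (hK1 : K ≤ 1) (hM0 : 0 ≤ M) (hM1 : M ≤ 1)
    {t : ℝ} (ht : 0 < t) :
    1 - K * M * K ≤ (1 - M) + (t : ℂ) • (1 : Matrix κ κ ℂ) + ((t⁻¹ : ℝ) : ℂ) • (1 - K * K) := by
  have hN : 0 ≤ 1 - K := sub_nonneg.2 hK1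
  obtain ⟨s, hs, rfl⟩ : ∃ s : ℝ, 0 < s ∧ t = s * s :=
    ⟨√t, Real.sqrt_pos.2 ht, (Real.mul_self_sqrt ht.le).symm⟩
  set X : Matrix κ κ ℂ := (s : ℂ) • M - ((s⁻¹ : ℝ) : ℂ) • (1 - K) with hX
  have hXh : star X = X := by
    have e1 : star M = M := hM0.posSemidef.1.eq
    have e2 : star (1 - K) = 1 - K := hN.posSemidef.1.eq
    rw [hX, star_sub, star_smul, star_smul, e1, e2]
    simp
  have p1 : 0 ≤ X * X := by
    have := star_mul_self_nonneg X
    rwa [hXh] at this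
  have p2 : 0 ≤ ((s * s : ℝ) : ℂ) • ((1 - M) + (M - M * M)) :=
    mac_smul_nonneg (add_nonneg (sub_nonneg.2 hM1) (mac_sq_le hM0 hM1)) ht.le
  have p3 : 0 ≤ (((s * s)⁻¹ * 2 : ℝ) : ℂ) • (K - K * K) :=
    mac_smul_nonneg (mac_sq_le hK0 hK1) (by positivity)
  have p4 := mac_conj_nonneg hN hM0
  rw [← sub_nonneg]
  have := add_nonneg (add_nonneg p1 p2) (add_nonneg p3 p4)
  convert this using 1
  have hs' : (s : ℂ) ≠ 0 := by exact_mod_cast hs.ne'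
  rw [hX]
  simp only [sub_mul, mul_sub, smul_mul_assoc, mul_smul_comm, smul_smul, one_mul, mul_one, smul_sub]
  push_cast
  match_scalars <;> field_simp <;> ring

/-- square-root measurement with the Hayashi–Nagaoka inequality -/
lemma mac_HN {J : Type*} [Fintype J] [DecidableEq J] (T : J → Matrix κ κ ℂ)
    (hT0 : ∀ j, 0 ≤ T j) (hT1 : ∀ j, T j ≤ 1) {η : ℝ} (hη : 0 < η) :
    ∃ D : J → Matrix κ κ ℂ, (∀ j, 0 ≤ D j) ∧ (∑ j, D j ≤ 1) ∧
      ∀ j, 1 - D j ≤ (2 : ℂ) • (1 - T j) +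
        (4 : ℂ) • ((∑ i ∈ Finset.univ.erase j, T i) + (η : ℂ) • 1) := by
  set S : Matrix κ κ ℂ := (∑ j, T j) + (η : ℂ) • 1 with hS
  have hη1 : (0 : Matrix κ κ ℂ) ≤ (η : ℂ) • 1 := mac_smul_nonneg Matrix.PosSemidef.one.nonneg hη.le
  have hS0 : 0 ≤ S := add_nonneg (Finset.sum_nonneg fun j _ => hT0 j) hη1
  have hSpd : S.PosDef := by
    refine Matrix.PosDef.posSemidef_add (Finset.sum_nonneg fun j _ => hT0 j).posSemidef ?_
    exact Matrix.PosDef.smul Matrix.PosDef.one (by exact_mod_cast hη)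
  set Q := CFC.sqrt S with hQ
  have hQ0 : 0 ≤ Q := CFC.sqrt_nonneg S
  have hQQ : Q * Q = S := CFC.sqrt_mul_sqrt_self S hS0
  have hdet : IsUnit Q.det := by
    have h1 : S.det ≠ 0 := hSpd.det_pos.ne'
    rw [← hQQ, Matrix.det_mul] at h1
    exact isUnit_iff_ne_zero.2 (left_ne_zero_of_mul h1)
  set A := Q⁻¹ with hA
  have hA0 : 0 ≤ A := hQ0.posSemidef.inv.nonneg
  have hAQ : A * Q = 1 := Matrix.nonsing_inv_mul Q hdet
  have hQA : Q * A = 1 := Matrix.mul_nonsing_inv Q hdet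
  have hASA : A * S * A = 1 := by
    rw [← hQQ, ← mul_assoc, hAQ, one_mul, hQA]
  refine ⟨fun j => A * T j * A, fun j => mac_conj_nonneg hA0 (hT0 j), ?_, fun j => ?_⟩
  · rw [← Finset.sum_mul, ← Finset.mul_sum, ← sub_nonneg]
    have := mac_conj_nonneg hA0 hη1
    convert this using 1
    conv_lhs => rw [← hASA]
    rw [hS]; noncomm_ring
  · have hTS : T j ≤ S := by
      rw [hS, ← Finset.add_sum_erase _ _ (Finset.mem_univ j), add_assoc]
      exact le_add_of_nonneg_right (add_nonneg (Finset.sum_nonneg fun j _ => hT0 j) hη1)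
    have hTT : T j * T j ≤ T j := sub_nonneg.1 (mac_sq_le (hT0 j) (hT1 j))
    have hTQ : T j ≤ Q := by
      have := CFC.sqrt_le_sqrt _ _ (hTT.trans hTS)
      rwa [CFC.sqrt_mul_self _ (hT0 j)] at this
    have hU : (∑ i ∈ Finset.univ.erase j, T i) + (η : ℂ) • 1 = S - T j := by
      rw [hS, ← Finset.add_sum_erase _ _ (Finset.mem_univ j)]; abel
    rw [hU]
    have hU0 : 0 ≤ S - T j := sub_nonneg.2 hTS
    -- 2U + 2(A-1)U(A-1) - AUA = (A-2) U (A-2)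
    have hA2 : star (A - (2 : ℂ) • (1 : Matrix κ κ ℂ)) = A - (2 : ℂ) • 1 := by
      have e1 : star A = A := hA0.posSemidef.1.eq
      rw [star_sub, e1, star_smul]; simp
    have hA1 : star (A - 1) = A - 1 := by
      have e1 : star A = A := hA0.posSemidef.1.eq
      rw [star_sub, e1]; simp
    have p1 := star_left_conjugate_nonneg hU0 (A - (2 : ℂ) • (1 : Matrix κ κ ℂ))
    rw [hA2] at p1
    have p2 := mac_smul_nonneg (star_left_conjugate_nonneg (hT0 j) (A - 1)) (zero_le_two)
    rw [hA1] at p2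
    have p3 := mac_smul_nonneg (sub_nonneg.2 hTQ) (zero_le_four)
    rw [← sub_nonneg]
    have := add_nonneg (add_nonneg p1 p2) p3
    convert this using 1
    have h1 : A * S = Q := by rw [← hQQ, ← mul_assoc, hAQ, one_mul]
    have h2 : S * A = Q := by rw [← hQQ, mul_assoc, hQA, mul_one]
    simp only [sub_mul, mul_sub, smul_mul_assoc, mul_smul_comm, smul_smul, one_mul, mul_one, smul_sub, hASA, h1, h2, hQA, hAQ]
    push_cast
    match_scalars <;> ring

end PartOne

section PartTwo
open Matrix
open scoped MatrixOrder Matrix.Norms.L2Operator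

/-- real part of tr(Aρ) -/
def mtr {κ : Type*} [Fintype κ] (A ρ : Matrix κ κ ℂ) : ℝ := (A * ρ).trace.re

section mtrlemmas
variable {κ : Type*} [Fintype κ]

lemma mtr_add_left (A B ρ : Matrix κ κ ℂ) : mtr (A + B) ρ = mtr A ρ + mtr B ρ := by
  simp [mtr, add_mul]
lemma mtr_sub_left (A B ρ : Matrix κ κ ℂ) : mtr (A - B) ρ = mtr A ρ - mtr B ρ := by
  simp [mtr, sub_mul]
lemma mtr_smul_left (t : ℝ) (A ρ : Matrix κ κ ℂ) : mtr ((t : ℂ) • A) ρ = t * mtr A ρ := by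
  simp [mtr]
lemma mtr_smul_right (t : ℝ) (A ρ : Matrix κ κ ℂ) : mtr A ((t : ℂ) • ρ) = t * mtr A ρ := by
  simp [mtr]
lemma mtr_sum_left {J : Type*} (s : Finset J) (A : J → Matrix κ κ ℂ) (ρ : Matrix κ κ ℂ) :
    mtr (∑ j ∈ s, A j) ρ = ∑ j ∈ s, mtr (A j) ρ := by
  simp [mtr, Finset.sum_mul, trace_sum]
lemma mtr_sum_right {J : Type*} (s : Finset J) (A : Matrix κ κ ℂ) (ρ : J → Matrix κ κ ℂ) :
    mtr A (∑ j ∈ s, ρ j) = ∑ j ∈ s, mtr A (ρ j) := by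
  simp [mtr, Finset.mul_sum, trace_sum]
lemma mtr_nonneg {A ρ : Matrix κ κ ℂ} (hA : 0 ≤ A) (hρ : 0 ≤ ρ) : 0 ≤ mtr A ρ := by
  classical
  have h1 : CFC.sqrt ρ * CFC.sqrt ρ = ρ := CFC.sqrt_mul_sqrt_self ρ hρ
  have h2 := mac_conj_nonneg (CFC.sqrt_nonneg ρ) hA
  rw [mtr, ← h1, ← mul_assoc, trace_mul_comm, ← mul_assoc]
  exact (Complex.le_def.1 h2.posSemidef.trace_nonneg).1
lemma mtr_mono {A B ρ : Matrix κ κ ℂ} (hA : A ≤ B) (hρ : 0 ≤ ρ) : mtr A ρ ≤ mtr B ρ := by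
  have := mtr_nonneg (sub_nonneg.2 hA) hρ
  rw [mtr_sub_left] at this; linarith
lemma mtr_comm (A B : Matrix κ κ ℂ) : mtr A B = mtr B A := by rw [mtr, mtr, trace_mul_comm]
lemma mtr_one [DecidableEq κ] (ρ : Matrix κ κ ℂ) : mtr 1 ρ = ρ.trace.re := by simp [mtr]
end mtrlemmas

section avg
variable {X M : Type*} [Fintype X] [Fintype M] [DecidableEq M]

lemma mac_sum_prod (g : M → X → ℝ) : ∑ c : M → X, ∏ i, g i (c i) = ∏ i, ∑ x, g i x := by
  rw [Finset.prod_univ_sum, Fintype.piFinset_univ]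

lemma mac_exp1 {P : X → ℝ} (hP : ∑ x, P x = 1) (m : M) (f : X → ℝ) :
    ∑ c : M → X, (∏ i, P (c i)) * f (c m) = ∑ x, P x * f x := by
  have h := mac_sum_prod (fun (i : M) x => P x * (if i = m then f x else 1))
  have e1 : ∀ i : M, ∑ x, P x * (if i = m then f x else 1)
      = if i = m then ∑ x, P x * f x else 1 := by
    intro i; split_ifs <;> simp [hP]
  simp only [e1, Finset.prod_mul_distrib, Finset.prod_ite_eq', Finset.mem_univ, if_true] at h
  exact h

lemma mac_exp2 {P : X → ℝ} (hP : ∑ x, P x = 1) {m m' : M} (hm : m ≠ m') (f : X → X → ℝ) :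
    ∑ c : M → X, (∏ i, P (c i)) * f (c m) (c m') = ∑ x, P x * ∑ y, P y * f x y := by
  classical
  have key : ∀ a : X, ∑ c : M → X, (∏ i, P (c i)) * ((if c m = a then 1 else 0) * f a (c m'))
      = P a * ∑ y, P y * f a y := by
    intro a
    have h := mac_sum_prod (fun (i : M) x => P x * ((if i = m then (if x = a then 1 else 0) else 1)
      * (if i = m' then f a x else 1)))
    have e1 : ∀ i : M, ∑ x, P x * ((if i = m then (if x = a then 1 else 0) else 1)
      * (if i = m' then f a x else 1))
        = (if i = m then P a else 1) * (if i = m' then ∑ x, P x * f a x else 1) := by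
      intro i
      by_cases h1 : i = m
      · subst h1; simp [hm]
      · by_cases h2 : i = m' <;> simp [h1, h2, hP, hm.symm]
    simp only [e1, Finset.prod_mul_distrib, Finset.prod_ite_eq', Finset.mem_univ, if_true] at h
    exact h
  rw [← Finset.sum_congr rfl fun a _ => key a, Finset.sum_comm]
  refine Finset.sum_congr rfl fun c _ => ?_
  rw [← Finset.mul_sum]
  simp

lemma mac_exp0 {P : X → ℝ} (hP : ∑ x, P x = 1) : ∑ c : M → X, (∏ i, P (c i)) = 1 := by
  rw [mac_sum_prod (fun _ x => P x)]; simp [hP]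
end avg

lemma mac_exists_le {C : Type*} [Fintype C] (w f : C → ℝ) (hw : ∀ c, 0 ≤ w c) (h1 : ∑ c, w c = 1)
    {B : ℝ} (h : ∑ c, w c * f c ≤ B) : ∃ c, f c ≤ B := by
  by_contra! hc
  have h2 : ∑ c, w c * B ≤ ∑ c, w c * f c :=
    Finset.sum_le_sum fun c _ => mul_le_mul_of_nonneg_left (hc c).le (hw c)
  have h3 : ∑ c, w c * (f c - B) = 0 := by
    simp only [mul_sub, Finset.sum_sub_distrib]
    rw [← Finset.sum_mul, h1, one_mul] at h2 ⊢; linarith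
  have h4 := (Finset.sum_eq_zero_iff_of_nonneg
    (fun c _ => mul_nonneg (hw c) (sub_nonneg.2 (hc c).le))).1 h3
  have h5 : ∑ c, w c = 0 := Finset.sum_eq_zero fun c hcu => by
    rcases mul_eq_zero.1 (h4 c hcu) with h | h
    · exact h
    · have := hc c; linarith
  linarith

/-- weighted sum as a linear functional -/
def wsum {C : Type*} [Fintype C] (w : C → ℝ) : (C → ℝ) →ₗ[ℝ] ℝ where
  toFun f := ∑ c, w c * f c
  map_add' f g := by simp [mul_add, Finset.sum_add_distrib]
  map_smul' r f := by simp only [Pi.smul_apply, smul_eq_mul, RingHom.id_apply, Finset.mul_sum]; exact Finset.sum_congr rfl fun c _ => by ring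

lemma mac_oneshot {X1 X2 κ : Type*} [Fintype X1] [Fintype X2] [Fintype κ] [DecidableEq κ]
    {P1 : X1 → ℝ} {P2 : X2 → ℝ} (hP1 : IsDist P1) (hP2 : IsDist P2)
    (ρ : X1 → X2 → Matrix κ κ ℂ) (hρ : ∀ x y, IsState (ρ x y))
    (T1 : X1 → Matrix κ κ ℂ) (hT1 : ∀ x, 0 ≤ T1 x) (hT1' : ∀ x, T1 x ≤ 1)
    (T2 : X1 → X2 → Matrix κ κ ℂ) (hT2 : ∀ x y, 0 ≤ T2 x y) (hT2' : ∀ x y, T2 x y ≤ 1)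
    {a1 b1 a2 b2 : ℝ}
    (hA1 : ∑ x, P1 x * ∑ y, P2 y * mtr (1 - T1 x) (ρ x y) ≤ a1)
    (hB1 : ∑ x, P1 x * ∑ x', P1 x' * ∑ y, P2 y * mtr (T1 x') (ρ x y) ≤ b1)
    (hA2 : ∑ x, P1 x * ∑ y, P2 y * mtr (1 - T2 x y) (ρ x y) ≤ a2)
    (hB2 : ∑ x, P1 x * ∑ y, P2 y * ∑ y', P2 y' * mtr (T2 x y') (ρ x y) ≤ b2)
    (J1 J2 : ℕ) (hJ1 : 1 ≤ J1) (hJ2 : 1 ≤ J2) {t η : ℝ} (ht : 0 < t) (hη : 0 < η) :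
    ∃ (u : Fin J1 → X1) (v : Fin J2 → X2) (D : Fin J1 × Fin J2 → Matrix κ κ ℂ), IsPOVM D ∧
      (1 / ((J1 : ℝ) * J2)) * ∑ m : Fin J1 × Fin J2, mtr (1 - D m) (ρ (u m.1) (v m.2)) ≤
        (2 * a2 + 4 * ((J2 - 1) * b2 + η)) + t + t⁻¹ * (2 * a1 + 4 * ((J1 - 1) * b1 + η)) := by
  choose E hE0 hEs hE using fun c : Fin J1 → X1 =>
    mac_HN (fun j => T1 (c j)) (fun j => hT1 _) (fun j => hT1' _) hη
  choose F hF0 hFs hF using fun (x : X1) (c : Fin J2 → X2) =>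
    mac_HN (fun j => T2 x (c j)) (fun j => hT2 _ _) (fun j => hT2' _ _) hη
  have hE1 : ∀ c l, E c l ≤ 1 := fun c l =>
    (Finset.single_le_sum (fun j _ => hE0 c j) (Finset.mem_univ l)).trans (hEs c)
  have hF1 : ∀ x c l, F x c l ≤ 1 := fun x c l =>
    (Finset.single_le_sum (fun j _ => hF0 x c j) (Finset.mem_univ l)).trans (hFs x c)
  set B : ℝ := (2 * a2 + 4 * ((J2 - 1) * b2 + η)) + t + t⁻¹ * (2 * a1 + 4 * ((J1 - 1) * b1 + η))
    with hB
  let C := (Fin J1 → X1) × (Fin J2 → X2)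
  let w : C → ℝ := fun c => (∏ i, P1 (c.1 i)) * (∏ i, P2 (c.2 i))
  have hw0 : ∀ c, 0 ≤ w c := fun c => mul_nonneg (Finset.prod_nonneg fun i _ => hP1.1 _)
    (Finset.prod_nonneg fun i _ => hP2.1 _)
  have hwsplit : ∀ f : C → ℝ, ∑ c, w c * f c =
      ∑ c1 : Fin J1 → X1, (∏ i, P1 (c1 i)) * ∑ c2 : Fin J2 → X2, (∏ i, P2 (c2 i)) * f (c1, c2) := by
    intro f
    rw [Fintype.sum_prod_type]
    refine Finset.sum_congr rfl fun c1 _ => ?_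
    rw [Finset.mul_sum]
    exact Finset.sum_congr rfl fun c2 _ => by simp only [w]; ring
  have hw1 : ∑ c, w c = 1 := by
    have := hwsplit (fun _ => 1)
    simp only [mul_one, mac_exp0 hP2.2, mac_exp0 hP1.2] at this
    exact this
  let K : C → Fin J1 → Matrix κ κ ℂ := fun c l => CFC.sqrt (E c.1 l)
  have hK0 : ∀ c l, 0 ≤ K c l := fun c l => CFC.sqrt_nonneg _
  have hKK : ∀ c l, K c l * K c l = E c.1 l := fun c l => CFC.sqrt_mul_sqrt_self _ (hE0 _ _)
  have hK1 : ∀ c l, K c l ≤ 1 := fun c l => by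
    have := CFC.sqrt_le_sqrt _ _ (hE1 c.1 l)
    rwa [CFC.sqrt_one] at this
  let D : C → Fin J1 × Fin J2 → Matrix κ κ ℂ := fun c m =>
    K c m.1 * F (c.1 m.1) c.2 m.2 * K c m.1
  have hD : ∀ c, IsPOVM (D c) := by
    intro c
    refine ⟨fun m => (mac_conj_nonneg (hK0 _ _) (hF0 _ _ _)).posSemidef, ?_⟩
    change ∑ m, D c m ≤ 1
    rw [Fintype.sum_prod_type]
    refine le_trans (Finset.sum_le_sum fun l _ => ?_) (hEs c.1)
    simp only [D]
    rw [← Finset.sum_mul, ← Finset.mul_sum, ← hKK c l, ← sub_nonneg]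
    have := mac_conj_nonneg (hK0 c l) (sub_nonneg.2 (hFs (c.1 l) c.2))
    convert this using 1
    noncomm_ring
  let err : Fin J1 × Fin J2 → C → ℝ := fun m c => mtr (1 - D c m) (ρ (c.1 m.1) (c.2 m.2))
  let G1 : Fin J1 × Fin J2 → C → ℝ := fun m c =>
    mtr (1 - T2 (c.1 m.1) (c.2 m.2)) (ρ (c.1 m.1) (c.2 m.2))
  let G2 : Fin J1 × Fin J2 → Fin J2 → C → ℝ := fun m j c =>
    mtr (T2 (c.1 m.1) (c.2 j)) (ρ (c.1 m.1) (c.2 m.2))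
  let G3 : Fin J1 × Fin J2 → C → ℝ := fun m c =>
    mtr (1 - T1 (c.1 m.1)) (ρ (c.1 m.1) (c.2 m.2))
  let G4 : Fin J1 × Fin J2 → Fin J1 → C → ℝ := fun m j c =>
    mtr (T1 (c.1 j)) (ρ (c.1 m.1) (c.2 m.2))
  let one : C → ℝ := fun _ => 1
  let bd : Fin J1 × Fin J2 → C → ℝ := fun m =>
    ((2 : ℝ) • G1 m + (4 : ℝ) • ((∑ j ∈ Finset.univ.erase m.2, G2 m j) + η • one)) + t • one +
      t⁻¹ • ((2 : ℝ) • G3 m + (4 : ℝ) • ((∑ j ∈ Finset.univ.erase m.1, G4 m j) + η • one))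
  have herr : ∀ m c, err m c ≤ bd m c := by
    intro m c
    have hr0 := (hρ (c.1 m.1) (c.2 m.2)).1.nonneg
    have hr1 : mtr 1 (ρ (c.1 m.1) (c.2 m.2)) = 1 := by
      rw [mtr_one, (hρ (c.1 m.1) (c.2 m.2)).2]; simp
    have e1 := mtr_mono (mac_gentle (hK0 c m.1) (hK1 c m.1) (hF0 (c.1 m.1) c.2 m.2)
      (hF1 (c.1 m.1) c.2 m.2) ht) hr0
    have e2 := mtr_mono (hF (c.1 m.1) c.2 m.2) hr0
    have e3 := mtr_mono (hE c.1 m.1) hr0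
    have h2 : (2 : ℂ) = ((2 : ℝ) : ℂ) := by norm_num
    have h4 : (4 : ℂ) = ((4 : ℝ) : ℂ) := by norm_num
    rw [hKK, mtr_add_left, mtr_add_left, mtr_smul_left, mtr_smul_left, hr1] at e1
    rw [h2, h4, mtr_add_left, mtr_smul_left, mtr_smul_left, mtr_add_left, mtr_smul_left, hr1,
      mtr_sum_left] at e2 e3
    simp only [err, bd, D, Pi.add_apply, Pi.smul_apply, smul_eq_mul, Finset.sum_apply, one, G1, G2,
      G3, G4]
    have e4 := mul_le_mul_of_nonneg_left e3 (inv_nonneg.2 ht.le)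
    linarith
  have hbd : ∀ m, wsum w (bd m) ≤ B := by
    intro m
    have k0 : wsum w one = 1 := by simp [wsum, one, hw1]
    have k1 : wsum w (G1 m) ≤ a2 := by
      refine le_trans (le_of_eq ?_) hA2
      change ∑ c, w c * _ = _
      rw [hwsplit]
      simp only [G1]
      rw [← mac_exp1 hP1.2 m.1]
      refine Finset.sum_congr rfl fun c1 _ => ?_
      rw [← mac_exp1 hP2.2 m.2]
    have k3 : wsum w (G3 m) ≤ a1 := by
      refine le_trans (le_of_eq ?_) hA1
      change ∑ c, w c * _ = _
      rw [hwsplit]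
      simp only [G3]
      rw [← mac_exp1 hP1.2 m.1]
      refine Finset.sum_congr rfl fun c1 _ => ?_
      rw [← mac_exp1 hP2.2 m.2]
    have k2 : ∀ j ∈ Finset.univ.erase m.2, wsum w (G2 m j) ≤ b2 := by
      intro j hj
      refine le_trans (le_of_eq ?_) hB2
      change ∑ c, w c * _ = _
      rw [hwsplit]
      simp only [G2]
      rw [← mac_exp1 hP1.2 m.1]
      refine Finset.sum_congr rfl fun c1 _ => ?_
      rw [← mac_exp2 hP2.2 (Finset.ne_of_mem_erase hj).symm]
    have k4 : ∀ j ∈ Finset.univ.erase m.1, wsum w (G4 m j) ≤ b1 := by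
      intro j hj
      refine le_trans (le_of_eq ?_) hB1
      change ∑ c, w c * _ = _
      rw [hwsplit]
      simp only [G4]
      rw [← mac_exp2 hP1.2 (Finset.ne_of_mem_erase hj).symm]
      refine Finset.sum_congr rfl fun c1 _ => ?_
      rw [← mac_exp1 hP2.2 m.2]
    have k2' := Finset.sum_le_sum k2
    have k4' := Finset.sum_le_sum k4
    have c1 : ((J1 - 1 : ℕ) : ℝ) = J1 - 1 := by push_cast [hJ1]; ring
    have c2 : ((J2 - 1 : ℕ) : ℝ) = J2 - 1 := by push_cast [hJ2]; ring
    simp only [Finset.sum_const, Finset.card_erase_of_mem (Finset.mem_univ _), Finset.card_univ,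
      Fintype.card_fin, nsmul_eq_mul, c1, c2] at k2' k4'
    simp only [bd, map_add, map_smul, map_sum, k0, smul_eq_mul, mul_one]
    rw [hB]
    gcongr
  have hJ1' : (0 : ℝ) < J1 := by exact_mod_cast hJ1
  have hJ2' : (0 : ℝ) < J2 := by exact_mod_cast hJ2
  have htot : wsum w (fun c => (1 / ((J1 : ℝ) * J2)) * ∑ m, err m c) ≤ B := by
    have : (fun c => (1 / ((J1 : ℝ) * J2)) * ∑ m, err m c) =
        (1 / ((J1 : ℝ) * J2)) • ∑ m, err m := by ext c; simp
    rw [this, map_smul, map_sum, smul_eq_mul]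
    have h1 : ∑ m, wsum w (err m) ≤ ∑ m : Fin J1 × Fin J2, B := Finset.sum_le_sum fun m _ =>
      le_trans (Finset.sum_le_sum fun c _ => mul_le_mul_of_nonneg_left (herr m c) (hw0 c)) (hbd m)
    simp only [Finset.sum_const, Finset.card_univ, Fintype.card_prod, Fintype.card_fin,
      nsmul_eq_mul, Nat.cast_mul] at h1
    rw [one_div, inv_mul_le_iff₀ (by positivity)]
    exact h1
  obtain ⟨c, hc⟩ := mac_exists_le w _ hw0 hw1 htot
  exact ⟨c.1, c.2, D c, hD c, hc⟩

end PartTwo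

section PartThree
open Matrix
open scoped MatrixOrder Matrix.Norms.L2Operator

section tens
variable {n : ℕ} {ι : Type*} [Fintype ι]

lemma mac_sum_prodC {X : Type*} [Fintype X] (g : Fin n → X → ℂ) :
    ∑ c : Fin n → X, ∏ i, g i (c i) = ∏ i, ∑ x, g i x := by
  rw [Finset.prod_univ_sum, Fintype.piFinset_univ]

lemma tensorPow_mul (A B : Fin n → Matrix ι ι ℂ) :
    tensorPow A * tensorPow B = tensorPow (fun k => A k * B k) := by
  ext i j
  simp only [tensorPow, mul_apply, of_apply]
  rw [← mac_sum_prodC (fun k x => A k (i k) x * B k x (j k))]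
  simp [Finset.prod_mul_distrib]

lemma tensorPow_conjTranspose (A : Fin n → Matrix ι ι ℂ) :
    (tensorPow A)ᴴ = tensorPow (fun k => (A k)ᴴ) := by
  ext i j
  simp [tensorPow, conjTranspose_apply]

lemma tensorPow_diagonal [DecidableEq ι] (d : Fin n → ι → ℂ) :
    tensorPow (fun k => diagonal (d k)) = diagonal (fun j : Fin n → ι => ∏ k, d k (j k)) := by
  ext i j
  simp only [tensorPow, of_apply, diagonal_apply]
  by_cases h : i = j
  · subst h; simp
  · rw [if_neg h]
    obtain ⟨k, hk⟩ := Function.ne_iff.1 h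
    exact Finset.prod_eq_zero (Finset.mem_univ k) (if_neg hk)

lemma tensorPow_one [DecidableEq ι] : tensorPow (fun _ : Fin n => (1 : Matrix ι ι ℂ)) = 1 := by
  have := tensorPow_diagonal (fun (_ : Fin n) (_ : ι) => (1 : ℂ))
  simpa using this

lemma tensorPow_trace (A : Fin n → Matrix ι ι ℂ) : (tensorPow A).trace = ∏ k, (A k).trace := by
  simp only [trace, diag_apply, tensorPow, of_apply]
  exact mac_sum_prodC (fun k x => A k x x)

lemma tensorPow_state (A : Fin n → Matrix ι ι ℂ) (hA : ∀ k, IsState (A k)) :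
    IsState (tensorPow A) := by
  classical
  refine ⟨?_, by rw [tensorPow_trace]; simp [fun k => (hA k).2]⟩
  have h : tensorPow A = (tensorPow fun k => CFC.sqrt (A k))ᴴ * tensorPow fun k => CFC.sqrt (A k) := by
    rw [tensorPow_conjTranspose, tensorPow_mul]
    congr 1; ext1 k
    have := (CFC.sqrt_nonneg (A k)).posSemidef.1.eq
    rw [this, CFC.sqrt_mul_sqrt_self _ (hA k).1.nonneg]
  rw [h]
  exact posSemidef_conjTranspose_mul_self _

lemma tensorPow_sum {X : Type*} [Fintype X] (P : X → ℝ) (V : Fin n → X → Matrix ι ι ℂ) :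
    ∑ y : Fin n → X, ((∏ k, P (y k) : ℝ) : ℂ) • tensorPow (fun k => V k (y k)) =
      tensorPow (fun k => ∑ y, (P y : ℂ) • V k y) := by
  ext i j
  simp only [tensorPow, Matrix.sum_apply, Matrix.smul_apply, of_apply, smul_eq_mul]
  rw [← mac_sum_prodC (fun k y => (P y : ℂ) * V k y (i k) (j k))]
  simp [Finset.prod_mul_distrib]
end tens

section proj
variable {κ : Type*} [Fintype κ] [DecidableEq κ]

/-- projector onto a set of the eigenbasis -/
noncomputable def sproj (U : Matrix κ κ ℂ) (s : Finset κ) : Matrix κ κ ℂ :=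
  U * diagonal (fun j => if j ∈ s then 1 else 0) * Uᴴ

lemma conj_diag_nonneg (U : Matrix κ κ ℂ) (d : κ → ℂ) (hd : ∀ j, 0 ≤ d j) :
    0 ≤ U * diagonal d * Uᴴ :=
  ((PosSemidef.diagonal hd).mul_mul_conjTranspose_same U).nonneg

lemma sproj_nonneg (U : Matrix κ κ ℂ) (s : Finset κ) : 0 ≤ sproj U s :=
  conj_diag_nonneg U _ fun j => by split_ifs <;> simp

lemma conj_diag_mul {U : Matrix κ κ ℂ} (hU : Uᴴ * U = 1) (d e : κ → ℂ) :
    (U * diagonal d * Uᴴ) * (U * diagonal e * Uᴴ) = U * diagonal (fun j => d j * e j) * Uᴴ := by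
  calc _ = U * diagonal d * (Uᴴ * U) * diagonal e * Uᴴ := by noncomm_ring
    _ = _ := by rw [hU, mul_one, mul_assoc U, diagonal_mul_diagonal]

lemma conj_diag_trace {U : Matrix κ κ ℂ} (hU : Uᴴ * U = 1) (d : κ → ℂ) :
    (U * diagonal d * Uᴴ).trace = ∑ j, d j := by
  rw [trace_mul_comm, ← mul_assoc, hU, one_mul, trace_diagonal]

lemma conj_diag_sub (U : Matrix κ κ ℂ) (d e : κ → ℂ) :
    (U * diagonal d * Uᴴ) - (U * diagonal e * Uᴴ) = U * diagonal (fun j => d j - e j) * Uᴴ := by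
  have : diagonal (fun j => d j - e j) = diagonal d - diagonal e := by
    rw [diagonal_sub]
  rw [this]; noncomm_ring

lemma one_eq_conj {U : Matrix κ κ ℂ} (hU : U * Uᴴ = 1) :
    (1 : Matrix κ κ ℂ) = U * diagonal (fun _ => 1) * Uᴴ := by
  simp [hU]

lemma sproj_idem {U : Matrix κ κ ℂ} (hU : Uᴴ * U = 1) (s : Finset κ) :
    sproj U s * sproj U s = sproj U s := by
  rw [sproj, conj_diag_mul hU]
  congr 3; ext j; split_ifs <;> simp

lemma sproj_le_one {U : Matrix κ κ ℂ} (hU : U * Uᴴ = 1) (s : Finset κ) : sproj U s ≤ 1 := by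
  rw [← sub_nonneg, one_eq_conj hU, sproj, conj_diag_sub]
  exact conj_diag_nonneg U _ fun j => by split_ifs <;> simp

lemma sproj_trace {U : Matrix κ κ ℂ} (hU : Uᴴ * U = 1) (s : Finset κ) :
    (sproj U s).trace.re = s.card := by
  rw [sproj, conj_diag_trace hU]; simp

lemma sproj_compl_mtr {U : Matrix κ κ ℂ} (hU : Uᴴ * U = 1) (hU' : U * Uᴴ = 1) (s : Finset κ)
    (d : κ → ℝ) :
    mtr (1 - sproj U s) (U * diagonal (fun j => (d j : ℂ)) * Uᴴ) =
      ∑ j, if j ∈ s then 0 else d j := by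
  rw [mtr, one_eq_conj hU', sproj, conj_diag_sub, conj_diag_mul hU, conj_diag_trace hU,
    Complex.re_sum]
  refine Finset.sum_congr rfl fun j _ => ?_
  split_ifs <;> simp

lemma sproj_sandwich {U : Matrix κ κ ℂ} (hU : Uᴴ * U = 1) (hU' : U * Uᴴ = 1) (s : Finset κ)
    (d : κ → ℝ) {α : ℝ} (hα : 0 ≤ α) (h : ∀ j ∈ s, d j ≤ α) :
    sproj U s * (U * diagonal (fun j => (d j : ℂ)) * Uᴴ) * sproj U s ≤ (α : ℂ) • 1 := by
  have e : (α : ℂ) • (1 : Matrix κ κ ℂ) = U * diagonal (fun _ => (α : ℂ)) * Uᴴ := by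
    have : diagonal (fun _ : κ => (α : ℂ)) = (α : ℂ) • 1 := by
      rw [← diagonal_one, ← diagonal_smul]; congr 1; ext; simp
    rw [this]; simp [hU']
  rw [← sub_nonneg, e, sproj, conj_diag_mul hU, conj_diag_mul hU, conj_diag_sub]
  refine conj_diag_nonneg U _ fun j => ?_
  split_ifs with hj
  · have := h j hj
    simp only [one_mul, mul_one]
    rw [← Complex.ofReal_sub]
    exact_mod_cast sub_nonneg.2 this
  · simpa using hα
end proj

lemma mac_cheb {Ω : Type*} [Fintype Ω] {p : Ω → ℝ} (hp : IsDist p) (f : Ω → ℝ) {μ : ℝ}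
    (hμ : ∑ ω, p ω * f ω = μ) {δ : ℝ} (hδ : 0 < δ) (n : ℕ) (hn : 0 < n)
    (bad : (Fin n → Ω) → Prop) [DecidablePred bad]
    (hbad : ∀ ω, bad ω → (∏ k, p (ω k)) = 0 ∨ n * δ ≤ |∑ k, f (ω k) - n * μ|) :
    ∑ ω : Fin n → Ω, (if bad ω then ∏ k, p (ω k) else 0) ≤
      (∑ ω, p ω * (f ω - μ) ^ 2) / (n * δ ^ 2) := by
  have hn' : (0 : ℝ) < n := by exact_mod_cast hn
  have hw0 : ∀ ω : Fin n → Ω, 0 ≤ ∏ k, p (ω k) := fun ω => Finset.prod_nonneg fun k _ => hp.1 _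
  set g : Ω → ℝ := fun ω => f ω - μ with hg
  have hg0 : ∑ ω, p ω * g ω = 0 := by
    simp only [hg, mul_sub, Finset.sum_sub_distrib, hμ]
    rw [← Finset.sum_mul, hp.2]; ring
  have h2 : ∑ ω : Fin n → Ω, (∏ k, p (ω k)) * (∑ k, g (ω k)) ^ 2 = n * ∑ ω, p ω * g ω ^ 2 := by
    have e1 : ∀ k l : Fin n, ∑ ω : Fin n → Ω, (∏ i, p (ω i)) * (g (ω k) * g (ω l)) =
        if k = l then ∑ ω, p ω * g ω ^ 2 else 0 := by
      intro k l
      split_ifs with h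
      · subst h
        rw [← mac_exp1 hp.2 k]
        exact Finset.sum_congr rfl fun ω _ => by ring
      · rw [mac_exp2 hp.2 h (fun a b => g a * g b)]
        refine Finset.sum_eq_zero fun a _ => ?_
        have : ∑ y, p y * (g a * g y) = g a * ∑ y, p y * g y := by
          rw [Finset.mul_sum]; exact Finset.sum_congr rfl fun y _ => by ring
        rw [this, hg0]; ring
    calc _ = ∑ ω : Fin n → Ω, ∑ k, ∑ l, (∏ i, p (ω i)) * (g (ω k) * g (ω l)) := by
            refine Finset.sum_congr rfl fun ω _ => ?_
            rw [sq, Finset.sum_mul_sum, Finset.mul_sum]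
            exact Finset.sum_congr rfl fun k _ => by rw [Finset.mul_sum]
      _ = ∑ k, ∑ l, ∑ ω : Fin n → Ω, (∏ i, p (ω i)) * (g (ω k) * g (ω l)) := by
            rw [Finset.sum_comm]
            exact Finset.sum_congr rfl fun k _ => by rw [Finset.sum_comm]
      _ = _ := by simp [e1]
  rw [le_div_iff₀ (by positivity)]
  have h3 : (∑ ω : Fin n → Ω, (if bad ω then ∏ k, p (ω k) else 0)) * (n * δ) ^ 2 ≤
      n * ∑ ω, p ω * g ω ^ 2 := by
    rw [← h2, Finset.sum_mul]
    refine Finset.sum_le_sum fun ω _ => ?_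
    split_ifs with hb
    · rcases hbad ω hb with h | h
      · rw [h]; simp
      · refine mul_le_mul_of_nonneg_left ?_ (hw0 ω)
        have : ∑ k, g (ω k) = ∑ k, f (ω k) - n * μ := by simp [hg]
        rw [this, ← sq_abs (∑ k, f (ω k) - n * μ)]
        gcongr
    · rw [zero_mul]; exact mul_nonneg (hw0 ω) (sq_nonneg _)
  have h4 : n * ((∑ ω : Fin n → Ω, (if bad ω then ∏ k, p (ω k) else 0)) * (n * δ ^ 2)) ≤
      n * ∑ ω, p ω * g ω ^ 2 := by
    calc _ = _ := by ring
      _ ≤ _ := h3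
  exact le_of_mul_le_mul_left h4 hn'

/-- a projector -/
structure IsPr {κ : Type*} [Fintype κ] [DecidableEq κ] (A : Matrix κ κ ℂ) : Prop where
  nn : 0 ≤ A
  le : A ≤ 1
  idem : A * A = A

lemma mac_typ {Z ι : Type*} [Fintype Z] [Fintype ι] [DecidableEq ι] {P : Z → ℝ} (hP : IsDist P)
    (V : Z → Matrix ι ι ℂ) (hV : ∀ z, IsState (V z)) {S : ℝ}
    (hS : S = ∑ z, P z * vnEntropy (V z)) {δ e : ℝ} (hδ : 0 < δ) (he : 0 < e) :
    ∃ N : ℕ, ∀ n : ℕ, N ≤ n → ∃ A B : (Fin n → Z) → Matrix (Fin n → ι) (Fin n → ι) ℂ,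
      (∀ z, IsPr (A z)) ∧ (∀ z, IsPr (B z)) ∧
      (∀ z, (A z).trace.re ≤ (2 : ℝ) ^ (n * (S + δ))) ∧
      (∑ z : Fin n → Z, (∏ k, P (z k)) * mtr (1 - A z) (tensorPow fun k => V (z k)) ≤ e) ∧
      (∀ z, B z * (tensorPow fun k => V (z k)) * B z ≤ (((2 : ℝ) ^ (-(n * (S - δ))) : ℝ) : ℂ) • 1) ∧
      (∑ z : Fin n → Z, (∏ k, P (z k)) * mtr (1 - B z) (tensorPow fun k => V (z k)) ≤ e) := by
  classical
  let lam : Z → ι → ℝ := fun z => (hV z).1.1.eigenvalues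
  have lam0 : ∀ z j, 0 ≤ lam z j := fun z j => (hV z).1.eigenvalues_nonneg j
  have lam1 : ∀ z, ∑ j, lam z j = 1 := fun z => by
    have := (hV z).1.1.trace_eq_sum_eigenvalues
    have h2 := (hV z).2.symm.trans this
    simp only [lam]
    have h3 := congrArg Complex.re h2
    rw [Complex.re_sum] at h3
    exact h3.symm
  have hent : ∀ z, vnEntropy (V z) = ∑ j, lam z j * (-Real.logb 2 (lam z j)) := fun z => by
    simp only [vnEntropy, dif_pos (hV z).1.1, lam, mul_neg, Finset.sum_neg_distrib]
  let U1 : Z → Matrix ι ι ℂ := fun z => ((hV z).1.1.eigenvectorUnitary : Matrix ι ι ℂ)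
  have hU1 : ∀ z, (U1 z)ᴴ * U1 z = 1 := fun z => Unitary.coe_star_mul_self _
  have hU1' : ∀ z, U1 z * (U1 z)ᴴ = 1 := fun z => Unitary.coe_mul_star_self _
  have hspec : ∀ z, V z = U1 z * diagonal (fun j => (lam z j : ℂ)) * (U1 z)ᴴ := fun z => by
    have := (hV z).1.1.spectral_theorem
    rw [Unitary.conjStarAlgAut_apply] at this
    exact this
  let p : Z × ι → ℝ := fun ω => P ω.1 * lam ω.1 ω.2
  have hp : IsDist p := by
    refine ⟨fun ω => mul_nonneg (hP.1 _) (lam0 _ _), ?_⟩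
    rw [Fintype.sum_prod_type]
    simp only [p, ← Finset.mul_sum, lam1, mul_one, hP.2]
  let f : Z × ι → ℝ := fun ω => -Real.logb 2 (lam ω.1 ω.2)
  have hμ : ∑ ω, p ω * f ω = S := by
    rw [Fintype.sum_prod_type, hS]
    refine Finset.sum_congr rfl fun z _ => ?_
    rw [hent, Finset.mul_sum]
    exact Finset.sum_congr rfl fun j _ => by simp only [p, f]; ring
  set var := ∑ ω, p ω * (f ω - S) ^ 2 with hvar
  obtain ⟨N, hN⟩ := exists_nat_gt (var / (e * δ ^ 2))
  refine ⟨N + 1, fun n hn => ?_⟩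
  have hn0 : 0 < n := by omega
  have hn' : (0 : ℝ) < n := by exact_mod_cast hn0
  have hvn : var / (n * δ ^ 2) ≤ e := by
    have h1 : (N : ℝ) ≤ n := by exact_mod_cast (by omega : N ≤ n)
    have h2 := hN.le.trans h1
    rw [div_le_iff₀ (by positivity)] at h2 ⊢
    linarith
  let U : (Fin n → Z) → Matrix (Fin n → ι) (Fin n → ι) ℂ := fun z => tensorPow fun k => U1 (z k)
  have hU : ∀ z, (U z)ᴴ * U z = 1 := fun z => by
    simp only [U]
    rw [tensorPow_conjTranspose, tensorPow_mul]
    simp only [hU1, tensorPow_one]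
  have hU' : ∀ z, U z * (U z)ᴴ = 1 := fun z => by
    simp only [U]
    rw [tensorPow_conjTranspose, tensorPow_mul]
    simp only [hU1', tensorPow_one]
  let L : (Fin n → Z) → (Fin n → ι) → ℝ := fun z j => ∏ k, lam (z k) (j k)
  have hL0 : ∀ z j, 0 ≤ L z j := fun z j => Finset.prod_nonneg fun k _ => lam0 _ _
  have hL1 : ∀ z, ∑ j, L z j = 1 := fun z => by
    simp only [L]
    rw [mac_sum_prod (fun k j => lam (z k) j)]; simp [lam1]
  have hρ : ∀ z : Fin n → Z, (tensorPow fun k => V (z k)) =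
      U z * diagonal (fun j => ((L z j : ℝ) : ℂ)) * (U z)ᴴ := fun z => by
    have h1 : diagonal (fun j => ((L z j : ℝ) : ℂ)) =
        tensorPow fun k => diagonal (fun i => (lam (z k) i : ℂ)) := by
      rw [tensorPow_diagonal]; congr 1; ext j; simp [L]
    rw [h1]
    simp only [U]
    rw [tensorPow_conjTranspose, tensorPow_mul, tensorPow_mul]
    congr 1; ext1 k; exact hspec (z k)
  have hlog : ∀ z j, L z j ≠ 0 → Real.logb 2 (L z j) = -∑ k, f (z k, j k) := fun z j h => by
    simp only [L, f]
    rw [Real.logb_prod _ _ (fun k _ hk => h (Finset.prod_eq_zero (Finset.mem_univ k) hk))]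
    simp
  -- the general weak-law bound
  have key : ∀ s : (Fin n → Z) → Finset (Fin n → ι),
      (∀ z j, j ∉ s z → L z j ≠ 0 → n * δ ≤ |∑ k, f (z k, j k) - n * S|) →
      ∑ z : Fin n → Z, (∏ k, P (z k)) * mtr (1 - sproj (U z) (s z)) (tensorPow fun k => V (z k))
        ≤ e := by
    intro s hs
    refine le_trans (le_of_eq ?_) ((mac_cheb hp f hμ hδ n hn0
      (fun ω => (fun k => (ω k).2) ∉ s (fun k => (ω k).1)) ?_).trans hvn)
    · rw [← Equiv.sum_comp (Equiv.arrowProdEquivProdArrow (Fin n) (fun _ => Z) (fun _ => ι)).symm,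
        Fintype.sum_prod_type]
      refine Finset.sum_congr rfl fun z _ => ?_
      rw [hρ, sproj_compl_mtr (hU z) (hU' z), Finset.mul_sum]
      refine Finset.sum_congr rfl fun j _ => ?_
      simp only [Equiv.arrowProdEquivProdArrow, Equiv.coe_fn_symm_mk, p, L, Finset.prod_mul_distrib]
      split_ifs <;> simp_all
    · intro ω hω
      by_cases h : L (fun k => (ω k).1) (fun k => (ω k).2) = 0
      · left
        simp only [p, Finset.prod_mul_distrib]
        simp only [L] at h
        rw [h, mul_zero]
      · right; exact hs _ _ hω h
  let sA : (Fin n → Z) → Finset (Fin n → ι) := fun z =>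
    Finset.univ.filter fun j => (2 : ℝ) ^ (-(n * (S + δ))) ≤ L z j
  let sB : (Fin n → Z) → Finset (Fin n → ι) := fun z =>
    Finset.univ.filter fun j => L z j ≤ (2 : ℝ) ^ (-(n * (S - δ)))
  have hpr : ∀ s z, IsPr (sproj (U z) s) := fun s z =>
    ⟨sproj_nonneg _ _, sproj_le_one (hU' z) _, sproj_idem (hU z) _⟩
  refine ⟨fun z => sproj (U z) (sA z), fun z => sproj (U z) (sB z), fun z => hpr _ _,
    fun z => hpr _ _, fun z => ?_, key _ ?_, fun z => ?_, key _ ?_⟩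
  · rw [sproj_trace (hU z)]
    have h1 : ∑ j ∈ sA z, (2 : ℝ) ^ (-(n * (S + δ))) ≤ ∑ j, L z j :=
      (Finset.sum_le_sum fun j hj => (Finset.mem_filter.1 hj).2).trans
        (Finset.sum_le_sum_of_subset_of_nonneg (Finset.subset_univ _) fun j _ _ => hL0 z j)
    rw [hL1, Finset.sum_const, nsmul_eq_mul, Real.rpow_neg (by norm_num)] at h1
    rwa [← div_eq_mul_inv, div_le_one (by positivity)] at h1
  · intro z j hj h0
    have hpos : 0 < L z j := lt_of_le_of_ne (hL0 z j) (Ne.symm h0)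
    have h1 : L z j < (2 : ℝ) ^ (-(n * (S + δ))) := by
      by_contra! h; exact hj (Finset.mem_filter.2 ⟨Finset.mem_univ _, h⟩)
    rw [← Real.logb_lt_iff_lt_rpow (by norm_num) hpos, hlog z j h0] at h1
    refine le_trans ?_ (le_abs_self _)
    linarith
  · rw [hρ]
    exact sproj_sandwich (hU z) (hU' z) _ _ (by positivity) fun j hj => (Finset.mem_filter.1 hj).2
  · intro z j hj h0
    have hpos : 0 < L z j := lt_of_le_of_ne (hL0 z j) (Ne.symm h0)
    have h1 : (2 : ℝ) ^ (-(n * (S - δ))) < L z j := by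
      by_contra! h; exact hj (Finset.mem_filter.2 ⟨Finset.mem_univ _, h⟩)
    rw [← Real.lt_logb_iff_rpow_lt (by norm_num) hpos, hlog z j h0] at h1
    refine le_trans ?_ (neg_le_abs _)
    linarith

end PartThree

section PartFour
open Matrix
open scoped MatrixOrder Matrix.Norms.L2Operator

section tests
variable {κ : Type*} [Fintype κ] [DecidableEq κ]

lemma test_nonneg {A B : Matrix κ κ ℂ} (hA : IsPr A) (hB : IsPr B) : 0 ≤ B * A * B :=
  mac_conj_nonneg hB.nn hA.nn

lemma test_le {A B : Matrix κ κ ℂ} (hA : IsPr A) (hB : IsPr B) : B * A * B ≤ 1 := by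
  have h := mac_conj_nonneg hB.nn (sub_nonneg.2 hA.le)
  have h2 : B * (1 - A) * B = B - B * A * B := by
    rw [mul_sub, sub_mul, mul_one, hB.idem]
  rw [h2, sub_nonneg] at h
  exact h.trans hB.le

lemma test_gentle {A B ρ : Matrix κ κ ℂ} (hA : IsPr A) (hB : IsPr B) (hρ : IsState ρ) {t : ℝ}
    (ht : 0 < t) :
    mtr (1 - B * A * B) ρ ≤ mtr (1 - A) ρ + t + t⁻¹ * mtr (1 - B) ρ := by
  have h := mtr_mono (mac_gentle hB.nn hB.le hA.nn hA.le ht) hρ.1.nonneg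
  have hr1 : mtr 1 ρ = 1 := by rw [mtr_one, hρ.2]; simp
  rwa [hB.idem, mtr_add_left, mtr_add_left, mtr_smul_left, mtr_smul_left, hr1, mul_one] at h

lemma test_pack {A B σ : Matrix κ κ ℂ} (hA : IsPr A) {α β : ℝ} (hα : 0 ≤ α)
    (h : B * σ * B ≤ (α : ℂ) • 1) (hβ : A.trace.re ≤ β) : mtr (B * A * B) σ ≤ α * β := by
  have e : mtr (B * A * B) σ = mtr (B * σ * B) A := by
    simp only [mtr]
    rw [mul_assoc (B * A), mul_assoc B A, trace_mul_comm, mul_assoc, trace_mul_comm]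
  rw [e]
  refine (mtr_mono h hA.nn).trans ?_
  rw [mtr_smul_left, mtr_one]
  exact mul_le_mul_of_nonneg_left hβ hα
end tests

lemma avg_le {X : Type*} [Fintype X] {P : X → ℝ} (hP : IsDist P) {f : X → ℝ} {B : ℝ}
    (h : ∀ x, f x ≤ B) : ∑ x, P x * f x ≤ B := by
  calc _ ≤ ∑ x, P x * B := Finset.sum_le_sum fun x _ => mul_le_mul_of_nonneg_left (h x) (hP.1 x)
    _ = B := by rw [← Finset.sum_mul, hP.2, one_mul]

lemma mtr_avg {X κ : Type*} [Fintype X] [Fintype κ] (P : X → ℝ) (A : Matrix κ κ ℂ)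
    (ρ : X → Matrix κ κ ℂ) : ∑ x, P x * mtr A (ρ x) = mtr A (∑ x, (P x : ℂ) • ρ x) := by
  rw [mtr_sum_right]; simp only [mtr_smul_right]

lemma avg2_gentle {X1 X2 : Type*} [Fintype X1] [Fintype X2]
    {P1 : X1 → ℝ} {P2 : X2 → ℝ} (hP1 : IsDist P1) (hP2 : IsDist P2) (f g h : X1 → X2 → ℝ)
    {s e : ℝ} (hs : 0 < s)
    (hf : ∀ x y, f x y ≤ g x y + s + s⁻¹ * h x y)
    (hg : ∑ x, P1 x * ∑ y, P2 y * g x y ≤ e) (hh : ∑ x, P1 x * ∑ y, P2 y * h x y ≤ e) :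
    ∑ x, P1 x * ∑ y, P2 y * f x y ≤ e + s + s⁻¹ * e := by
  calc _ ≤ ∑ x, P1 x * ∑ y, P2 y * (g x y + s + s⁻¹ * h x y) := by
        refine Finset.sum_le_sum fun x _ => mul_le_mul_of_nonneg_left ?_ (hP1.1 x)
        exact Finset.sum_le_sum fun y _ => mul_le_mul_of_nonneg_left (hf x y) (hP2.1 y)
    _ = ∑ x, (P1 x * ∑ y, P2 y * g x y + P1 x * s + s⁻¹ * (P1 x * ∑ y, P2 y * h x y)) := by
        refine Finset.sum_congr rfl fun x _ => ?_
        have : ∑ y, P2 y * (g x y + s + s⁻¹ * h x y) =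
            ∑ y, P2 y * g x y + s + s⁻¹ * ∑ y, P2 y * h x y := by
          rw [Finset.mul_sum]
          calc _ = ∑ y, (P2 y * g x y + P2 y * s + s⁻¹ * (P2 y * h x y)) :=
                Finset.sum_congr rfl fun y _ => by ring
            _ = _ := by
              rw [Finset.sum_add_distrib, Finset.sum_add_distrib, ← Finset.sum_mul, hP2.2, one_mul]
        rw [this]; ring
    _ = ∑ x, P1 x * ∑ y, P2 y * g x y + s + s⁻¹ * ∑ x, P1 x * ∑ y, P2 y * h x y := by
        rw [Finset.sum_add_distrib, Finset.sum_add_distrib, ← Finset.sum_mul, hP1.2, one_mul,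
          ← Finset.mul_sum]
    _ ≤ _ := by gcongr

lemma mac_oneshot2 {X1 X2 κ : Type*} [Fintype X1] [Fintype X2] [Fintype κ] [DecidableEq κ]
    {P1 : X1 → ℝ} {P2 : X2 → ℝ} (hP1 : IsDist P1) (hP2 : IsDist P2)
    (ρ : X1 → X2 → Matrix κ κ ℂ) (hρ : ∀ x y, IsState (ρ x y))
    (ρ1 : X1 → Matrix κ κ ℂ) (hρ1 : ∀ x, ∑ y, (P2 y : ℂ) • ρ x y = ρ1 x)
    (ρ0 : Matrix κ κ ℂ) (hρ0 : ∑ x, (P1 x : ℂ) • ρ1 x = ρ0)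
    (B0 : Matrix κ κ ℂ) (A1 B1 : X1 → Matrix κ κ ℂ) (A2 : X1 → X2 → Matrix κ κ ℂ)
    (pB0 : IsPr B0) (pA1 : ∀ x, IsPr (A1 x)) (pB1 : ∀ x, IsPr (B1 x)) (pA2 : ∀ x y, IsPr (A2 x y))
    {e α0 α1 β1 β2 : ℝ} (hα0 : 0 ≤ α0) (hα1 : 0 ≤ α1)
    (h0 : mtr (1 - B0) ρ0 ≤ e) (h1a : ∑ x, P1 x * mtr (1 - A1 x) (ρ1 x) ≤ e)
    (h1b : ∑ x, P1 x * mtr (1 - B1 x) (ρ1 x) ≤ e)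
    (h2 : ∑ x, P1 x * ∑ y, P2 y * mtr (1 - A2 x y) (ρ x y) ≤ e)
    (s0 : B0 * ρ0 * B0 ≤ (α0 : ℂ) • 1) (s1 : ∀ x, B1 x * ρ1 x * B1 x ≤ (α1 : ℂ) • 1)
    (t1 : ∀ x, (A1 x).trace.re ≤ β1) (t2 : ∀ x y, (A2 x y).trace.re ≤ β2)
    (J1 J2 : ℕ) (hJ1 : 1 ≤ J1) (hJ2 : 1 ≤ J2) {s t η : ℝ} (hs : 0 < s) (ht : 0 < t) (hη : 0 < η) :
    ∃ (u : Fin J1 → X1) (v : Fin J2 → X2) (D : Fin J1 × Fin J2 → Matrix κ κ ℂ), IsPOVM D ∧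
      (1 / ((J1 : ℝ) * J2)) * ∑ m : Fin J1 × Fin J2, mtr (1 - D m) (ρ (u m.1) (v m.2)) ≤
        (2 * (e + s + s⁻¹ * e) + 4 * ((J2 - 1) * (α1 * β2) + η)) + t +
          t⁻¹ * (2 * (e + s + s⁻¹ * e) + 4 * ((J1 - 1) * (α0 * β1) + η)) := by
  refine mac_oneshot hP1 hP2 ρ hρ (fun x => B0 * A1 x * B0) (fun x => test_nonneg (pA1 x) pB0)
    (fun x => test_le (pA1 x) pB0) (fun x y => B1 x * A2 x y * B1 x)
    (fun x y => test_nonneg (pA2 x y) (pB1 x)) (fun x y => test_le (pA2 x y) (pB1 x))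
    ?_ ?_ ?_ ?_ J1 J2 hJ1 hJ2 ht hη
  · refine avg2_gentle hP1 hP2 _ (fun x y => mtr (1 - A1 x) (ρ x y)) (fun x y => mtr (1 - B0) (ρ x y))
      hs (fun x y => test_gentle (pA1 x) pB0 (hρ x y) hs) ?_ ?_
    · simpa only [mtr_avg, hρ1] using h1a
    · simpa only [mtr_avg, hρ1, hρ0] using h0
  · have : ∑ x, P1 x * ∑ x', P1 x' * ∑ y, P2 y * mtr (B0 * A1 x' * B0) (ρ x y) =
        ∑ x', P1 x' * mtr (B0 * A1 x' * B0) ρ0 := by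
      simp only [mtr_avg, hρ1, Finset.mul_sum]
      rw [Finset.sum_comm]
      refine Finset.sum_congr rfl fun x' _ => ?_
      rw [← hρ0, ← mtr_avg, Finset.mul_sum]
      exact Finset.sum_congr rfl fun x _ => by ring
    rw [this]
    exact avg_le hP1 fun x => test_pack (pA1 x) hα0 s0 (t1 x)
  · refine avg2_gentle hP1 hP2 _ (fun x y => mtr (1 - A2 x y) (ρ x y))
      (fun x y => mtr (1 - B1 x) (ρ x y))
      hs (fun x y => test_gentle (pA2 x y) (pB1 x) (hρ x y) hs) h2 ?_
    simpa only [mtr_avg, hρ1] using h1b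
  · refine avg_le hP1 fun x => ?_
    have : ∑ y, P2 y * ∑ y', P2 y' * mtr (B1 x * A2 x y' * B1 x) (ρ x y) =
        ∑ y', P2 y' * mtr (B1 x * A2 x y' * B1 x) (ρ1 x) := by
      simp only [Finset.mul_sum]
      rw [Finset.sum_comm]
      refine Finset.sum_congr rfl fun x' _ => ?_
      rw [← hρ1, ← mtr_avg, Finset.mul_sum]
      exact Finset.sum_congr rfl fun x _ => by ring
    rw [this]
    exact avg_le hP2 fun y => test_pack (pA2 x y) hα1 (s1 x) (t2 x y)

lemma isDist_pow {X : Type*} [Fintype X] {P : X → ℝ} (hP : IsDist P) (n : ℕ) :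
    IsDist (fun x : Fin n → X => ∏ k, P (x k)) :=
  ⟨fun _ => Finset.prod_nonneg fun _ _ => hP.1 _, mac_exp0 hP.2⟩

lemma isState_avg {X ι : Type*} [Fintype X] [Fintype ι] {P : X → ℝ} (hP : IsDist P)
    {V : X → Matrix ι ι ℂ} (hV : ∀ x, IsState (V x)) : IsState (∑ x, (P x : ℂ) • V x) := by
  classical
  refine ⟨(Finset.sum_nonneg fun x _ => mac_smul_nonneg (hV x).1.nonneg (hP.1 x)).posSemidef, ?_⟩
  simp only [trace_sum, trace_smul, (hV _).2, smul_eq_mul, mul_one]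
  exact_mod_cast hP.2

lemma mac_corner_large {Y1 Y2 ι : Type*} [Fintype Y1] [Fintype Y2] [Fintype ι] [DecidableEq ι]
    (W : Y1 → Y2 → Matrix ι ι ℂ) (hW : ∀ y1 y2, IsState (W y1 y2))
    (Q1 : Y1 → ℝ) (Q2 : Y2 → ℝ) (hQ1 : IsDist Q1) (hQ2 : IsDist Q2)
    {S0 S1 S2 : ℝ} (hS0 : S0 = vnEntropy (∑ x, (Q1 x : ℂ) • ∑ y, (Q2 y : ℂ) • W x y))
    (hS1 : S1 = ∑ x, Q1 x * vnEntropy (∑ y, (Q2 y : ℂ) • W x y))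
    (hS2 : S2 = ∑ p : Y1 × Y2, (Q1 p.1 * Q2 p.2) * vnEntropy (W p.1 p.2))
    {ε δ : ℝ} (hε : 0 < ε) (hδ : 0 < δ) :
    ∃ N : ℕ, ∀ n : ℕ, N ≤ n → ∃ J1 J2 : ℕ, 1 ≤ J1 ∧ 1 ≤ J2 ∧
      n * (S0 - S1 - δ) ≤ Real.logb 2 J1 ∧ n * (S1 - S2 - δ) ≤ Real.logb 2 J2 ∧
      MACCodeExists W n J1 J2 ε := by
  classical
  set V1 : Y1 → Matrix ι ι ℂ := fun x => ∑ y, (Q2 y : ℂ) • W x y with hV1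
  have sV1 : ∀ x, IsState (V1 x) := fun x => isState_avg hQ2 (hW x)
  set V0 : Matrix ι ι ℂ := ∑ x, (Q1 x : ℂ) • V1 x with hV0
  have sV0 : IsState V0 := isState_avg hQ1 sV1
  obtain ⟨τ, hτ, hτ1, hτε⟩ : ∃ τ : ℝ, 0 < τ ∧ τ ≤ 1 ∧ 50 * τ ≤ ε :=
    ⟨min 1 (ε / 50), by positivity, min_le_left _ _, by
      have := min_le_right 1 (ε / 50); linarith⟩
  have he : 0 < τ ^ 4 := by positivity
  have hδ' : 0 < δ / 4 := by positivity
  have dQ : IsDist (fun p : Y1 × Y2 => Q1 p.1 * Q2 p.2) := by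
    refine ⟨fun p => mul_nonneg (hQ1.1 _) (hQ2.1 _), ?_⟩
    rw [Fintype.sum_prod_type]
    simp only [← Finset.mul_sum, hQ2.2, mul_one, hQ1.2]
  have dU : IsDist (fun _ : Unit => (1 : ℝ)) := ⟨fun _ => zero_le_one, by simp⟩
  obtain ⟨N0, hN0⟩ := mac_typ dU (fun _ => V0) (fun _ => sV0) (S := S0) (by simp [hS0]) hδ' he
  obtain ⟨N1, hN1⟩ := mac_typ hQ1 V1 sV1 hS1 hδ' he
  obtain ⟨N2, hN2⟩ := mac_typ dQ (fun p : Y1 × Y2 => W p.1 p.2) (fun p => hW p.1 p.2) hS2 hδ' he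
  obtain ⟨N3, hN3⟩ := exists_nat_gt (-(Real.logb 2 (τ ^ 2)) / (δ / 2))
  refine ⟨max (max N0 N1) (max N2 N3), fun n hn => ?_⟩
  simp only [max_le_iff] at hn
  obtain ⟨_, B0, _, pB0, _, _, s0, h0⟩ := hN0 n hn.1.1
  obtain ⟨A1, B1, pA1, pB1, t1, h1a, s1, h1b⟩ := hN1 n hn.1.2
  obtain ⟨A2, _, pA2, _, t2, h2, _, _⟩ := hN2 n hn.2.1
  have hexp : (2 : ℝ) ^ (-(n * (δ / 2))) ≤ τ ^ 2 := by
    rw [← Real.le_logb_iff_rpow_le (by norm_num) (by positivity)]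
    have h3 : (N3 : ℝ) ≤ n := by exact_mod_cast hn.2.2
    have h4 := hN3.le.trans h3
    rw [div_le_iff₀ (by positivity)] at h4
    linarith
  have hJ : ∀ a b : ℝ, ∃ J : ℕ, 1 ≤ J ∧ n * (a - b - δ) ≤ Real.logb 2 J ∧
      ((J : ℝ) - 1) * ((2 : ℝ) ^ (-(n * (a - δ / 4))) * (2 : ℝ) ^ (n * (b + δ / 4))) ≤ τ ^ 2 := by
    intro a b
    have hpos : (0 : ℝ) < (2 : ℝ) ^ (n * (a - b - δ)) := by positivity
    refine ⟨⌈(2 : ℝ) ^ (n * (a - b - δ))⌉₊, Nat.one_le_ceil_iff.2 hpos, ?_, ?_⟩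
    · rw [Real.le_logb_iff_rpow_le (by norm_num) (by exact_mod_cast Nat.ceil_pos.2 hpos)]
      exact Nat.le_ceil _
    · have h1 := Nat.ceil_lt_add_one hpos.le
      refine le_trans ?_ hexp
      calc _ ≤ (2 : ℝ) ^ (n * (a - b - δ)) *
            ((2 : ℝ) ^ (-(n * (a - δ / 4))) * (2 : ℝ) ^ (n * (b + δ / 4))) := by
            refine mul_le_mul_of_nonneg_right ?_ (by positivity)
            linarith
        _ = _ := by
            rw [← Real.rpow_add (by norm_num), ← Real.rpow_add (by norm_num)]
            congr 1; ring
  obtain ⟨J1, hJ1, hJ1r, hJ1e⟩ := hJ S0 S1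
  obtain ⟨J2, hJ2, hJ2r, hJ2e⟩ := hJ S1 S2
  refine ⟨J1, J2, hJ1, hJ2, hJ1r, hJ2r, ?_⟩
  have hz : ∑ z : Fin n → Unit, (∏ k, (fun _ : Unit => (1 : ℝ)) (z k)) * mtr (1 - B0 z)
      (tensorPow fun k => V0) = mtr (1 - B0 fun _ => ()) (tensorPow fun k => V0) := by
    rw [Fintype.sum_unique]; simp
  rw [hz] at h0
  obtain ⟨u, v, D, hD, hDe⟩ := mac_oneshot2 (isDist_pow hQ1 n) (isDist_pow hQ2 n)
    (fun x y => tensorPow fun k => W (x k) (y k))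
    (fun x y => tensorPow_state _ fun k => hW _ _)
    (fun x => tensorPow fun k => V1 (x k)) (fun x => tensorPow_sum Q2 fun k => W (x k))
    (tensorPow fun k => V0) (tensorPow_sum Q1 fun k => V1)
    (B0 fun _ => ()) A1 B1 (fun x y => A2 fun k => (x k, y k))
    (pB0 _) pA1 pB1 (fun x y => pA2 _) (by positivity) (by positivity) h0 h1a h1b
    (by
      rw [← Equiv.sum_comp (Equiv.arrowProdEquivProdArrow (Fin n) (fun _ => Y1) (fun _ => Y2)).symm,
        Fintype.sum_prod_type] at h2
      refine le_trans (le_of_eq ?_) h2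
      refine Finset.sum_congr rfl fun x _ => ?_
      rw [Finset.mul_sum]
      refine Finset.sum_congr rfl fun y _ => ?_
      simp only [Equiv.arrowProdEquivProdArrow, Equiv.coe_fn_symm_mk, Finset.prod_mul_distrib]
      ring)
    (s0 _) s1 t1 (fun x y => t2 _) J1 J2 hJ1 hJ2 (s := τ ^ 2) (t := τ) (η := τ ^ 2)
    (by positivity) hτ (by positivity)
  refine ⟨u, v, D, hD, hDe.trans (le_trans ?_ hτε)⟩
  have i1 : (τ ^ 2)⁻¹ * τ ^ 4 = τ ^ 2 := by field_simp
  rw [i1]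
  have q2 : τ ^ 2 ≤ τ := by nlinarith
  have q4 : τ ^ 4 ≤ τ ^ 2 := by nlinarith [sq_nonneg τ]
  have k2 : 2 * (τ ^ 4 + τ ^ 2 + τ ^ 2) + 4 * (((J2 : ℝ) - 1) * ((2 : ℝ) ^ (-(n * (S1 - δ / 4))) * (2 : ℝ) ^ (n * (S2 + δ / 4))) + τ ^ 2) ≤ 14 * τ ^ 2 := by
    linarith
  have k1 : 2 * (τ ^ 4 + τ ^ 2 + τ ^ 2) + 4 * (((J1 : ℝ) - 1) * ((2 : ℝ) ^ (-(n * (S0 - δ / 4))) * (2 : ℝ) ^ (n * (S1 + δ / 4))) + τ ^ 2) ≤ 14 * τ ^ 2 := by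
    linarith
  have k3 := mul_le_mul_of_nonneg_left k1 (inv_nonneg.2 hτ.le)
  have k4 : τ⁻¹ * (14 * τ ^ 2) = 14 * τ := by field_simp
  linarith

end PartFour

section PartFive
open Matrix
open scoped MatrixOrder Matrix.Norms.L2Operator Kronecker

section kron
variable {κ κ' : Type*} [Fintype κ] [DecidableEq κ] [Fintype κ'] [DecidableEq κ']

lemma mac_sub_kron (A A' : Matrix κ κ ℂ) (B : Matrix κ' κ' ℂ) :
    (A - A') ⊗ₖ B = A ⊗ₖ B - A' ⊗ₖ B := by
  ext i j; simp [kroneckerMap_apply, sub_mul]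

lemma mac_kron_sub (A : Matrix κ κ ℂ) (B B' : Matrix κ' κ' ℂ) :
    A ⊗ₖ (B - B') = A ⊗ₖ B - A ⊗ₖ B' := by
  ext i j; simp [kroneckerMap_apply, mul_sub]

lemma kron_nonneg {A : Matrix κ κ ℂ} {B : Matrix κ' κ' ℂ} (hA : 0 ≤ A) (hB : 0 ≤ B) :
    0 ≤ A ⊗ₖ B := (PosSemidef.kronecker hA.posSemidef hB.posSemidef).nonneg

lemma kron_le_one {A : Matrix κ κ ℂ} {B : Matrix κ' κ' ℂ} (hA : 0 ≤ A) (hA1 : A ≤ 1) (hB1 : B ≤ 1) :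
    A ⊗ₖ B ≤ 1 := by
  have h1 := kron_nonneg (sub_nonneg.2 hA1) (zero_le_one (α := Matrix κ' κ' ℂ))
  have h2 := kron_nonneg hA (sub_nonneg.2 hB1)
  have h3 := add_nonneg h1 h2
  rw [← sub_nonneg]
  convert h3 using 1
  rw [mac_sub_kron, mac_kron_sub, one_kronecker_one]; abel

lemma kron_err {A : Matrix κ κ ℂ} {B : Matrix κ' κ' ℂ} (hA1 : A ≤ 1) (hB1 : B ≤ 1)
    {ρ : Matrix κ κ ℂ} {ρ' : Matrix κ' κ' ℂ} (hρ : IsState ρ) (hρ' : IsState ρ') :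
    mtr (1 - A ⊗ₖ B) (ρ ⊗ₖ ρ') ≤ mtr (1 - A) ρ + mtr (1 - B) ρ' := by
  have h1 : 1 - A ⊗ₖ B ≤ (1 - A) ⊗ₖ (1 : Matrix κ' κ' ℂ) + (1 : Matrix κ κ ℂ) ⊗ₖ (1 - B) := by
    have h := kron_nonneg (sub_nonneg.2 hA1) (sub_nonneg.2 hB1)
    rw [← sub_nonneg]
    convert h using 1
    simp only [mac_sub_kron, mac_kron_sub, one_kronecker_one]; abel
  refine (mtr_mono h1 (kron_nonneg hρ.1.nonneg hρ'.1.nonneg)).trans (le_of_eq ?_)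
  rw [mtr_add_left]
  simp only [mtr, ← mul_kronecker_mul, trace_kronecker, one_mul, hρ.2, hρ'.2, mul_one]

lemma mtr_submatrix (A B : Matrix κ κ ℂ) (e : κ' ≃ κ) :
    mtr (A.submatrix e e) (B.submatrix e e) = mtr A B := by
  rw [mtr, mtr, submatrix_mul_equiv]
  congr 1
  simp only [trace, diag_apply, submatrix_apply]
  exact Equiv.sum_comp e (fun i => (A * B) i i)

end kron

/-- splitting equivalence -/
def macSplit (ι : Type*) (a b : ℕ) : (Fin (a + b) → ι) ≃ (Fin a → ι) × (Fin b → ι) where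
  toFun f := (fun i => f (Fin.castAdd b i), fun i => f (Fin.natAdd a i))
  invFun p := Fin.append p.1 p.2
  left_inv f := Fin.append_castAdd_natAdd
  right_inv p := by ext <;> simp

lemma tensorPow_split {ι : Type*} [Fintype ι] {a b : ℕ} (M : Fin (a + b) → Matrix ι ι ℂ) :
    tensorPow M = ((tensorPow fun i => M (Fin.castAdd b i)) ⊗ₖ
      (tensorPow fun i => M (Fin.natAdd a i))).submatrix (macSplit ι a b) (macSplit ι a b) := by
  ext i j
  simp [tensorPow, macSplit, Fin.prod_univ_add, kroneckerMap_apply]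

lemma povm_le {κ J : Type*} [Fintype κ] [DecidableEq κ] [Fintype J] {D : J → Matrix κ κ ℂ}
    (hD : IsPOVM D) (j : J) : D j ≤ 1 :=
  (Finset.single_le_sum (f := D) (fun i _ => (hD.1 i).nonneg) (Finset.mem_univ j)).trans
    (Matrix.le_iff.2 hD.2)

lemma mac_product {Y1 Y2 ι : Type*} [Fintype ι] [DecidableEq ι]
    {W : Y1 → Y2 → Matrix ι ι ℂ} (hW : ∀ y1 y2, IsState (W y1 y2)) {a b J1 J2 K1 K2 : ℕ}
    {ε ε' : ℝ} (hJ1 : 1 ≤ J1) (hJ2 : 1 ≤ J2) (hK1 : 1 ≤ K1) (hK2 : 1 ≤ K2)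
    (h : MACCodeExists W a J1 J2 ε) (h' : MACCodeExists W b K1 K2 ε') :
    MACCodeExists W (a + b) (J1 * K1) (J2 * K2) (ε + ε') := by
  obtain ⟨u, v, D, hD, hE⟩ := h
  obtain ⟨u', v', D', hD', hE'⟩ := h'
  let σ : Fin (J1 * K1) × Fin (J2 * K2) ≃ (Fin J1 × Fin J2) × (Fin K1 × Fin K2) :=
    (Equiv.prodCongr finProdFinEquiv.symm finProdFinEquiv.symm).trans (Equiv.prodProdProdComm ..)
  let φ := macSplit ι a b
  refine ⟨fun m => Fin.append (u (finProdFinEquiv.symm m).1) (u' (finProdFinEquiv.symm m).2),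
    fun m => Fin.append (v (finProdFinEquiv.symm m).1) (v' (finProdFinEquiv.symm m).2),
    fun m => (D (σ m).1 ⊗ₖ D' (σ m).2).submatrix φ φ, ⟨fun m => ?_, ?_⟩, ?_⟩
  · exact (PosSemidef.kronecker (hD.1 _) (hD'.1 _)).submatrix _
  · have e1 : ∑ m, (D (σ m).1 ⊗ₖ D' (σ m).2).submatrix φ φ
        = ((∑ m, D m) ⊗ₖ (∑ m, D' m)).submatrix φ φ := by
      rw [Equiv.sum_comp σ (fun p => (D p.1 ⊗ₖ D' p.2).submatrix φ φ)]
      ext i j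
      simp only [Matrix.sum_apply, submatrix_apply, kroneckerMap_apply, Fintype.sum_prod_type (α₁ := Fin J1 × Fin J2),
        Finset.sum_mul_sum]
    have h1 : (∑ m, D m) ⊗ₖ (∑ m, D' m) ≤ 1 :=
      kron_le_one (Finset.sum_nonneg fun i _ => (hD.1 i).nonneg) (Matrix.le_iff.2 hD.2)
        (Matrix.le_iff.2 hD'.2)
    rw [e1, loewnerLE]
    have h2 := (Matrix.le_iff.1 h1).submatrix φ
    rwa [submatrix_sub, Pi.sub_apply, Pi.sub_apply, submatrix_one_equiv] at h2
  · have e2 : ∀ m : Fin (J1 * K1) × Fin (J2 * K2),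
        ((1 - (D (σ m).1 ⊗ₖ D' (σ m).2).submatrix φ φ) * tensorPow fun k =>
          W (Fin.append (u (finProdFinEquiv.symm m.1).1) (u' (finProdFinEquiv.symm m.1).2) k)
            (Fin.append (v (finProdFinEquiv.symm m.2).1) (v' (finProdFinEquiv.symm m.2).2) k)).trace.re
        ≤ (fun p : (Fin J1 × Fin J2) × (Fin K1 × Fin K2) =>
            mtr (1 - D p.1) (tensorPow fun k => W (u p.1.1 k) (v p.1.2 k)) +
            mtr (1 - D' p.2) (tensorPow fun k => W (u' p.2.1 k) (v' p.2.2 k))) (σ m) := by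
      intro m
      rw [tensorPow_split]
      simp only [Fin.append_left, Fin.append_right]
      have e3 : 1 - (D (σ m).1 ⊗ₖ D' (σ m).2).submatrix φ φ
          = (1 - D (σ m).1 ⊗ₖ D' (σ m).2).submatrix φ φ := by
        rw [submatrix_sub, Pi.sub_apply, Pi.sub_apply, submatrix_one_equiv]
      rw [e3]
      refine (le_of_eq (mtr_submatrix _ _ φ)).trans ?_
      exact kron_err (povm_le hD _) (povm_le hD' _) (tensorPow_state _ fun _ => hW _ _)
        (tensorPow_state _ fun _ => hW _ _)
    have hs := (Finset.sum_le_sum fun m (_ : m ∈ Finset.univ) => e2 m).trans_eq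
      (Equiv.sum_comp σ (fun p : (Fin J1 × Fin J2) × (Fin K1 × Fin K2) =>
            mtr (1 - D p.1) (tensorPow fun k => W (u p.1.1 k) (v p.1.2 k)) +
            mtr (1 - D' p.2) (tensorPow fun k => W (u' p.2.1 k) (v' p.2.2 k))))
    rw [Fintype.sum_prod_type (α₁ := Fin J1 × Fin J2)] at hs
    simp only [Finset.sum_add_distrib, Finset.sum_const, Finset.card_univ, Fintype.card_prod,
      Fintype.card_fin, nsmul_eq_mul, ← Finset.mul_sum] at hs
    have p1 : (0 : ℝ) < J1 := by exact_mod_cast hJ1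
    have p2 : (0 : ℝ) < J2 := by exact_mod_cast hJ2
    have p3 : (0 : ℝ) < K1 := by exact_mod_cast hK1
    have p4 : (0 : ℝ) < K2 := by exact_mod_cast hK2
    refine (mul_le_mul_of_nonneg_left hs (by positivity)).trans ?_
    refine le_trans (le_of_eq ?_) (add_le_add hE hE')
    simp only [mtr]
    push_cast
    field_simp

lemma mac_swap {Y1 Y2 ι : Type*} [Fintype ι] [DecidableEq ι]
    {W : Y1 → Y2 → Matrix ι ι ℂ} {n J1 J2 : ℕ} {ε : ℝ}
    (h : MACCodeExists (fun y x => W x y) n J2 J1 ε) : MACCodeExists W n J1 J2 ε := by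
  obtain ⟨u, v, D, hD, hE⟩ := h
  refine ⟨v, u, fun m => D m.swap, ⟨fun m => hD.1 _, ?_⟩, ?_⟩
  · have := hD.2
    rwa [← Equiv.sum_comp (Equiv.prodComm _ _)] at this
  · rw [← Equiv.sum_comp (Equiv.prodComm _ _)] at hE
    rw [mul_comm (J1 : ℝ)]
    exact hE

lemma mac_trivial {Y1 Y2 ι : Type*} [Fintype ι] [DecidableEq ι]
    (W : Y1 → Y2 → Matrix ι ι ℂ) (n : ℕ) {ε : ℝ} (hε : 0 ≤ ε) (x : Y1) (y : Y2) :
    MACCodeExists W n 1 1 ε := by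
  refine ⟨fun _ _ => x, fun _ _ => y, fun _ => 1, ⟨fun _ => PosSemidef.one, ?_⟩, ?_⟩
  · simp [loewnerLE, PosSemidef.zero]
  · simpa using hε

/-- corner achievable for all n -/
def CornerOK {Y1 Y2 ι : Type*} [Fintype ι] [DecidableEq ι]
    (W : Y1 → Y2 → Matrix ι ι ℂ) (r1 r2 : ℝ) : Prop :=
  ∀ ε δ : ℝ, 0 < ε → 0 < δ → ∃ C : ℝ, 0 ≤ C ∧ ∀ n : ℕ, ∃ J1 J2 : ℕ, 1 ≤ J1 ∧ 1 ≤ J2 ∧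
    n * (r1 - δ) - C ≤ Real.logb 2 J1 ∧ n * (r2 - δ) - C ≤ Real.logb 2 J2 ∧
    MACCodeExists W n J1 J2 ε

lemma mac_corner {Y1 Y2 ι : Type*} [Fintype Y1] [Fintype Y2] [Fintype ι] [DecidableEq ι]
    (W : Y1 → Y2 → Matrix ι ι ℂ) (hW : ∀ y1 y2, IsState (W y1 y2))
    (Q1 : Y1 → ℝ) (Q2 : Y2 → ℝ) (hQ1 : IsDist Q1) (hQ2 : IsDist Q2)
    {S0 S1 S2 : ℝ} (hS0 : S0 = vnEntropy (∑ x, (Q1 x : ℂ) • ∑ y, (Q2 y : ℂ) • W x y))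
    (hS1 : S1 = ∑ x, Q1 x * vnEntropy (∑ y, (Q2 y : ℂ) • W x y))
    (hS2 : S2 = ∑ p : Y1 × Y2, (Q1 p.1 * Q2 p.2) * vnEntropy (W p.1 p.2)) :
    CornerOK W (S0 - S1) (S1 - S2) := by
  intro ε δ hε hδ
  obtain ⟨N, hN⟩ := mac_corner_large W hW Q1 Q2 hQ1 hQ2 hS0 hS1 hS2 hε hδ
  have n1 : Nonempty Y1 := by
    by_contra hc
    rw [not_nonempty_iff] at hc
    have := hQ1.2; simp at this
  have n2 : Nonempty Y2 := by
    by_contra hc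
    rw [not_nonempty_iff] at hc
    have := hQ2.2; simp at this
  refine ⟨N * (|S0 - S1| + |S1 - S2|), by positivity, fun n => ?_⟩
  by_cases hn : N ≤ n
  · obtain ⟨J1, J2, a, b, c, d, e⟩ := hN n hn
    have : 0 ≤ N * (|S0 - S1| + |S1 - S2|) := by positivity
    exact ⟨J1, J2, a, b, by linarith, by linarith, e⟩
  · have hn' : (n : ℝ) ≤ N := by exact_mod_cast (not_le.1 hn).le
    have key : ∀ r s : ℝ, n * (r - δ) ≤ N * (|r| + |s|) := by
      intro r s
      calc n * (r - δ) ≤ n * (|r| + |s|) := by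
            refine mul_le_mul_of_nonneg_left ?_ (by positivity)
            have := le_abs_self r; have := abs_nonneg s; linarith
        _ ≤ _ := mul_le_mul_of_nonneg_right hn' (by positivity)
    refine ⟨1, 1, le_rfl, le_rfl, ?_, ?_, mac_trivial W n hε.le n1.some n2.some⟩
    · have := key (S0 - S1) (S1 - S2); simp; linarith
    · have := key (S1 - S2) (S0 - S1); rw [add_comm |S0 - S1|]; simp; linarith

lemma mac_timeshare {Y1 Y2 ι : Type*} [Fintype ι] [DecidableEq ι]
    {W : Y1 → Y2 → Matrix ι ι ℂ} (hW : ∀ y1 y2, IsState (W y1 y2)) {r1 r2 s1 s2 : ℝ}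
    (hA : CornerOK W r1 r2) (hB : CornerOK W s1 s2) {l R1 R2 : ℝ} (hl0 : 0 ≤ l) (hl1 : l ≤ 1)
    (h1 : R1 ≤ l * r1 + (1 - l) * s1) (h2 : R2 ≤ l * r2 + (1 - l) * s2)
    {ε δ : ℝ} (hε : 0 < ε) (hδ : 0 < δ) :
    ∃ N : ℕ, ∀ n : ℕ, N ≤ n →
      ∃ J1 J2 : ℕ, 1 ≤ J1 ∧ 1 ≤ J2 ∧
        R1 - δ ≤ (1 / n : ℝ) * Real.logb 2 J1 ∧
        R2 - δ ≤ (1 / n : ℝ) * Real.logb 2 J2 ∧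
        MACCodeExists W n J1 J2 ε := by
  obtain ⟨C, hC0, hC⟩ := hA (ε / 2) (δ / 2) (by positivity) (by positivity)
  obtain ⟨C', hC0', hC'⟩ := hB (ε / 2) (δ / 2) (by positivity) (by positivity)
  set B := C + C' + |r1 - s1| + |r2 - s2| with hBdef
  have hB0 : 0 ≤ B := by positivity
  obtain ⟨N, hN⟩ := exists_nat_gt (2 * B / δ)
  refine ⟨N + 1, fun n hn => ?_⟩
  have hnpos : (0 : ℝ) < n := by exact_mod_cast (by omega : 0 < n)
  have hNn : (N : ℝ) ≤ n := by exact_mod_cast (by omega : N ≤ n)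
  have hnB : B ≤ n * (δ / 2) := by
    have := hN.le.trans hNn
    rw [div_le_iff₀ hδ] at this; linarith
  have hln : l * n ≤ n := by nlinarith
  have hfl := Nat.floor_le (a := l * n) (by positivity)
  have hfl2 := Nat.lt_floor_add_one (l * n)
  obtain ⟨b, hb⟩ : ∃ b, ⌊l * (n : ℝ)⌋₊ + b = n := by
    refine ⟨n - ⌊l * (n : ℝ)⌋₊, Nat.add_sub_of_le ?_⟩
    exact_mod_cast hfl.trans hln
  generalize ⌊l * (n : ℝ)⌋₊ = a at *
  obtain ⟨J1, J2, p1, p2, q1, q2, hc⟩ := hC a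
  obtain ⟨K1, K2, p1', p2', q1', q2', hc'⟩ := hC' b
  have hcode := mac_product hW p1 p2 p1' p2' hc hc'
  rw [hb, add_halves] at hcode
  have hbr : (b : ℝ) = n - a := by rw [← hb]; push_cast; ring
  have hd0 : 0 ≤ l * n - a := by linarith
  have hd1 : l * n - a ≤ 1 := by linarith
  have dev : ∀ x y : ℝ, (l * n - a) * (x - y) ≤ |x - y| := fun x y => by
    have := le_abs_self (x - y); have := abs_nonneg (x - y); nlinarith
  have lg : ∀ J K : ℕ, 1 ≤ J → 1 ≤ K →
      Real.logb 2 ((J * K : ℕ) : ℝ) = Real.logb 2 J + Real.logb 2 K := by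
    intro J K hJ hK
    rw [Nat.cast_mul, Real.logb_mul (by positivity) (by positivity)]
  have fin : ∀ R r s L : ℝ, R ≤ l * r + (1 - l) * s →
      a * (r - δ / 2) + b * (s - δ / 2) - (C + C') ≤ L → C + C' + |r - s| ≤ B →
      R - δ ≤ (1 / n : ℝ) * L := by
    intro R r s L hR hL hB'
    rw [one_div, inv_mul_eq_div, le_div_iff₀ hnpos]
    have h3 := mul_le_mul_of_nonneg_right hR hnpos.le
    have h4 := dev r s
    rw [hbr] at hL
    nlinarith
  have a1 := abs_nonneg (r1 - s1)
  have a2 := abs_nonneg (r2 - s2)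
  refine ⟨J1 * K1, J2 * K2, Nat.mul_pos p1 p1', Nat.mul_pos p2 p2', ?_, ?_, hcode⟩
  · rw [lg _ _ p1 p1']
    exact fin R1 r1 s1 _ h1 (by linarith) (by linarith)
  · rw [lg _ _ p2 p2']
    exact fin R2 r2 s2 _ h2 (by linarith) (by linarith)

lemma mac_final {Y1 Y2 ι : Type*} [Fintype Y1] [Fintype Y2] [Fintype ι] [DecidableEq ι]
    (W : Y1 → Y2 → Matrix ι ι ℂ) (hW : ∀ y1 y2, IsState (W y1 y2))
    (Q1 : Y1 → ℝ) (Q2 : Y2 → ℝ) (hQ1 : IsDist Q1) (hQ2 : IsDist Q2)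
    (R1 R2 : ℝ)
    (h1 : R1 ≤ ∑ y2, Q2 y2 * holevo Q1 (fun y1 => W y1 y2))
    (h2 : R2 ≤ ∑ y1, Q1 y1 * holevo Q2 (fun y2 => W y1 y2))
    (h12 : R1 + R2 ≤ holevo (fun p : Y1 × Y2 => Q1 p.1 * Q2 p.2) (fun p => W p.1 p.2))
    (ε δ : ℝ) (hε : 0 < ε) (hδ : 0 < δ) :
    ∃ N : ℕ, ∀ n : ℕ, N ≤ n →
      ∃ J1 J2 : ℕ, 1 ≤ J1 ∧ 1 ≤ J2 ∧
        R1 - δ ≤ (1 / n : ℝ) * Real.logb 2 J1 ∧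
        R2 - δ ≤ (1 / n : ℝ) * Real.logb 2 J2 ∧
        MACCodeExists W n J1 J2 ε := by
  have cA := mac_corner W hW Q1 Q2 hQ1 hQ2 rfl rfl rfl
  have cB := mac_corner (fun y x => W x y) (fun y x => hW x y) Q2 Q1 hQ2 hQ1 rfl rfl rfl
  have e0 : (∑ y, (Q2 y : ℂ) • ∑ x, (Q1 x : ℂ) • W x y) =
      ∑ x, (Q1 x : ℂ) • ∑ y, (Q2 y : ℂ) • W x y := by
    simp only [Finset.smul_sum]
    rw [Finset.sum_comm]
    simp only [smul_smul, mul_comm]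
  have e0' : (∑ p : Y1 × Y2, ((Q1 p.1 * Q2 p.2 : ℝ) : ℂ) • W p.1 p.2) =
      ∑ x, (Q1 x : ℂ) • ∑ y, (Q2 y : ℂ) • W x y := by
    simp only [Finset.smul_sum, Fintype.sum_prod_type, smul_smul, Complex.ofReal_mul]
  have e2 : ∑ p : Y2 × Y1, (Q2 p.1 * Q1 p.2) * vnEntropy (W p.2 p.1) =
      ∑ p : Y1 × Y2, (Q1 p.1 * Q2 p.2) * vnEntropy (W p.1 p.2) := by
    rw [← Equiv.sum_comp (Equiv.prodComm _ _)]
    refine Finset.sum_congr rfl fun p _ => ?_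
    simp [mul_comm]
  simp only [e0, e2] at cB
  have i1 : ∑ y2, Q2 y2 * holevo Q1 (fun y1 => W y1 y2) =
      ∑ y, Q2 y * vnEntropy (∑ x, (Q1 x : ℂ) • W x y) -
        ∑ p : Y1 × Y2, (Q1 p.1 * Q2 p.2) * vnEntropy (W p.1 p.2) := by
    simp only [holevo, mul_sub, Finset.sum_sub_distrib]
    congr 1
    rw [← e2, Fintype.sum_prod_type]
    simp only [Finset.mul_sum, mul_assoc]
  have i2 : ∑ y1, Q1 y1 * holevo Q2 (fun y2 => W y1 y2) =
      ∑ x, Q1 x * vnEntropy (∑ y, (Q2 y : ℂ) • W x y) -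
        ∑ p : Y1 × Y2, (Q1 p.1 * Q2 p.2) * vnEntropy (W p.1 p.2) := by
    simp only [holevo, mul_sub, Finset.sum_sub_distrib]
    congr 1
    rw [Fintype.sum_prod_type]
    simp only [Finset.mul_sum, mul_assoc]
  rw [holevo, e0'] at h12
  rw [i1] at h1
  rw [i2] at h2
  generalize vnEntropy (∑ x, (Q1 x : ℂ) • ∑ y, (Q2 y : ℂ) • W x y) = S0 at *
  generalize ∑ p : Y1 × Y2, (Q1 p.1 * Q2 p.2) * vnEntropy (W p.1 p.2) = S2 at *
  generalize ∑ x, Q1 x * vnEntropy (∑ y, (Q2 y : ℂ) • W x y) = S1 at *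
  generalize ∑ y, Q2 y * vnEntropy (∑ x, (Q1 x : ℂ) • W x y) = T1 at *
  have cB' : CornerOK W (T1 - S2) (S0 - T1) := by
    intro ε δ hε hδ
    obtain ⟨C, hC0, hC⟩ := cB ε δ hε hδ
    refine ⟨C, hC0, fun n => ?_⟩
    obtain ⟨J1, J2, a, b, c, d, e⟩ := hC n
    exact ⟨J2, J1, b, a, d, c, mac_swap e⟩
  obtain ⟨l, hl0, hl1, ha, hb⟩ : ∃ l : ℝ, 0 ≤ l ∧ l ≤ 1 ∧
      R1 ≤ l * (S0 - S1) + (1 - l) * (T1 - S2) ∧ R2 ≤ l * (S1 - S2) + (1 - l) * (S0 - T1) := by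
    by_cases hc : R1 ≤ S0 - S1
    · exact ⟨1, zero_le_one, le_rfl, by linarith, by linarith⟩
    · push Not at hc
      have hD : 0 < (T1 - S2) - (S0 - S1) := by linarith
      refine ⟨((T1 - S2) - R1) / ((T1 - S2) - (S0 - S1)), div_nonneg (by linarith) hD.le,
        (div_le_one hD).2 (by linarith), ?_, ?_⟩
      · have := div_mul_cancel₀ ((T1 - S2) - R1) hD.ne'
        nlinarith
      · have := div_mul_cancel₀ ((T1 - S2) - R1) hD.ne'
        nlinarith
  exact mac_timeshare hW cA cB' hl0 hl1 ha hb hε hδ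

end PartFive

/-- Achievability for the classical-quantum multiple-access channel. -/
theorem mac_achievability
    {Y1 Y2 ι : Type*} [Fintype Y1] [Fintype Y2] [Fintype ι] [DecidableEq ι]
    (W : Y1 → Y2 → Matrix ι ι ℂ) (hW : ∀ y1 y2, IsState (W y1 y2))
    (Q1 : Y1 → ℝ) (Q2 : Y2 → ℝ) (hQ1 : IsDist Q1) (hQ2 : IsDist Q2)
    (R1 R2 : ℝ) (hR1 : 0 ≤ R1) (hR2 : 0 ≤ R2)
    (h1 : R1 ≤ ∑ y2, Q2 y2 * holevo Q1 (fun y1 => W y1 y2))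
    (h2 : R2 ≤ ∑ y1, Q1 y1 * holevo Q2 (fun y2 => W y1 y2))
    (h12 : R1 + R2 ≤ holevo (fun p : Y1 × Y2 => Q1 p.1 * Q2 p.2) (fun p => W p.1 p.2))
    (ε δ : ℝ) (hε : 0 < ε) (hδ : 0 < δ) :
    ∃ N : ℕ, ∀ n : ℕ, N ≤ n →
      ∃ J1 J2 : ℕ, 1 ≤ J1 ∧ 1 ≤ J2 ∧
        R1 - δ ≤ (1 / n : ℝ) * Real.logb 2 J1 ∧
        R2 - δ ≤ (1 / n : ℝ) * Real.logb 2 J2 ∧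
        MACCodeExists W n J1 J2 ε := by
  exact mac_final W hW Q1 Q2 hQ1 hQ2 R1 R2 h1 h2 h12 ε δ hε hδ
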